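/- arXiv:2301.08580 — 9 statements merged into one kernel-verified Lean document; each statement's English description precedes it below -/
import Mathlib

section
/- Let κ > -1 and ρ > -1 be real, let m, n be nonnegative integers, and let z, w ∈ ℂ with z ∉ (-∞,0] and 1 - z·w ∉ (-∞,0]. Then the Rodrigues-type expression equals the explicit finite sum: (-1)^m · z^{-ρ} · (1-zw)^{-κ} · D^m[u ↦ u^n · u^ρ · (1-uw)^{κ+m}](z) = Z^{κ,ρ}_{m,n}(z,w), where D^m denotes the m-th complex derivative in the variable u (with w held fixed). -/
open Complex Finset

/-- The fractional Zernike function `Z^{κ,ρ}_{m,n}(z,w)`, viewed as a function of two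
independent complex variables. -/
noncomputable def fracZernike (κ ρ : ℝ) (m n : ℕ) (z w : ℂ) : ℂ :=
  ∑ j ∈ Finset.range (m + 1),
    ((-1 : ℂ) ^ j * (Nat.factorial m : ℂ) * Complex.Gamma ((n : ℂ) + ρ + 1) *
        Complex.Gamma ((κ : ℂ) + m + 1) /
      ((Nat.factorial j : ℂ) * (Nat.factorial (m - j) : ℂ) *
        Complex.Gamma ((n : ℂ) + ρ - j + 1) * Complex.Gamma ((κ : ℂ) + j + 1))) *
    (1 - z * w) ^ j * z ^ ((n : ℤ) - (j : ℤ)) * w ^ (m - j)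


lemma gamma_ratio (a : ℂ) (ha : Complex.Gamma (a + 1) ≠ 0) (j : ℕ) :
    Complex.Gamma (a + 1) / Complex.Gamma (a - j + 1) = (descPochhammer ℂ j).eval a := by
  induction j with
  | zero => simp [ha]
  | succ k ih =>
    rw [descPochhammer_succ_eval, ← ih]
    have e : a - ((k + 1 : ℕ) : ℂ) + 1 = a - k := by push_cast; ring
    rw [e]
    by_cases h : a - k = 0
    · rw [h]; simp [Complex.Gamma_zero]
    · rw [Complex.Gamma_add_one _ h]
      by_cases h2 : Complex.Gamma (a - k) = 0
      · simp [h2]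
      · field_simp

lemma iter_cpow (c d a : ℂ) (j : ℕ) : ∀ z : ℂ, c + z * d ∈ Complex.slitPlane →
    iteratedDeriv j (fun u : ℂ => (c + u * d) ^ a) z
      = d ^ j * (descPochhammer ℂ j).eval a * (c + z * d) ^ (a - j) := by
  induction j with
  | zero => intro z hz; simp
  | succ k ih =>
    intro z hz
    have hev : ∀ᶠ u in nhds z, c + u * d ∈ Complex.slitPlane :=
      ContinuousAt.eventually_mem (f := fun u : ℂ => c + u * d) (by fun_prop)
        (Complex.isOpen_slitPlane.mem_nhds hz)
    have he : iteratedDeriv k (fun u : ℂ => (c + u * d) ^ a) =ᶠ[nhds z]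
        fun u => d ^ k * (descPochhammer ℂ k).eval a * (c + u * d) ^ (a - k) :=
      hev.mono fun u hu => ih u hu
    rw [iteratedDeriv_succ, he.deriv_eq]
    have h0 : HasDerivAt (fun u : ℂ => c + u * d) d z := by
      simpa using ((hasDerivAt_id z).mul_const d).const_add c
    have h2 := ((h0.cpow_const (c := a - k) hz).const_mul
      (d ^ k * (descPochhammer ℂ k).eval a)).deriv
    rw [h2, descPochhammer_succ_eval]
    have e : a - ((k + 1 : ℕ) : ℂ) = a - k - 1 := by push_cast; ring
    rw [e]; ring

lemma contDiffAt_cpow_aff (c d a z : ℂ) (m : ℕ) (hz : c + z * d ∈ Complex.slitPlane) :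
    ContDiffAt ℂ m (fun u : ℂ => (c + u * d) ^ a) z := by
  have : AnalyticAt ℂ (fun u : ℂ => (c + u * d) ^ a) z :=
    AnalyticAt.cpow (by fun_prop) (by fun_prop) hz
  exact this.contDiffAt

/-- Rodrigues type formula for the fractional Zernike functions. -/
theorem rodrigues_fracZernike (κ ρ : ℝ) (hκ : -1 < κ) (hρ : -1 < ρ) (m n : ℕ) (z w : ℂ)
    (hz : ¬(z.re ≤ 0 ∧ z.im = 0)) (h1 : ¬((1 - z * w).re ≤ 0 ∧ (1 - z * w).im = 0)) :
    (-1 : ℂ) ^ m * z ^ (-(ρ : ℂ)) * (1 - z * w) ^ (-(κ : ℂ)) *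
      iteratedDeriv m (fun u : ℂ => u ^ n * u ^ (ρ : ℂ) * (1 - u * w) ^ ((κ : ℂ) + m)) z
    = fracZernike κ ρ m n z w := by
  have hzs : z ∈ Complex.slitPlane := by
    rw [Complex.mem_slitPlane_iff]; by_contra h; push Not at h; exact hz h
  have h1s : 1 - z * w ∈ Complex.slitPlane := by
    rw [Complex.mem_slitPlane_iff]; by_contra h; push Not at h; exact h1 h
  have hz0 := Complex.slitPlane_ne_zero hzs
  have h10 := Complex.slitPlane_ne_zero h1s
  have hzs' : 0 + z * 1 ∈ Complex.slitPlane := by simpa using hzs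
  have h1s' : 1 + z * (-w) ∈ Complex.slitPlane := by simpa [sub_eq_add_neg] using h1s
  have hev : (fun u : ℂ => u ^ n * u ^ (ρ : ℂ) * (1 - u * w) ^ ((κ : ℂ) + m)) =ᶠ[nhds z]
      fun u => (0 + u * 1) ^ ((n : ℂ) + ρ) * (1 + u * (-w)) ^ ((κ : ℂ) + m) := by
    filter_upwards [isOpen_ne.mem_nhds hz0] with u hu
    rw [zero_add, mul_one, Complex.cpow_add _ _ hu, Complex.cpow_natCast, mul_neg,
      ← sub_eq_add_neg]
  rw [hev.iteratedDeriv_eq, iteratedDeriv_fun_mul (contDiffAt_cpow_aff _ _ _ _ _ hzs')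
    (contDiffAt_cpow_aff _ _ _ _ _ h1s'), fracZernike, Finset.mul_sum]
  refine Finset.sum_congr rfl fun j hj => ?_
  have hjm : j ≤ m := by simpa [Nat.lt_succ_iff] using hj
  have hg1 : Complex.Gamma ((n : ℂ) + ρ + 1) ≠ 0 := by
    apply Complex.Gamma_ne_zero_of_re_pos
    have : (0 : ℝ) ≤ n := n.cast_nonneg
    simp; linarith
  have hg2 : Complex.Gamma ((κ : ℂ) + m + 1) ≠ 0 := by
    apply Complex.Gamma_ne_zero_of_re_pos
    have : (0 : ℝ) ≤ m := m.cast_nonneg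
    simp; linarith
  rw [iter_cpow _ _ _ _ _ hzs', iter_cpow _ _ _ _ _ h1s', ← gamma_ratio _ hg1,
    ← gamma_ratio _ hg2]
  obtain ⟨k, rfl⟩ := Nat.exists_eq_add_of_le hjm
  rw [Nat.add_sub_cancel_left, zero_add, mul_one, mul_neg, ← sub_eq_add_neg]
  have e1 : (κ : ℂ) + ((j + k : ℕ) : ℂ) - (k : ℂ) = κ + j := by push_cast; ring
  have e2 : (n : ℂ) + ρ - j = ρ + ((n : ℤ) - (j : ℤ) : ℤ) := by push_cast; ring
  have e3 : z ^ ((n : ℂ) + ρ - j) = z ^ (ρ : ℂ) * z ^ ((n : ℤ) - (j : ℤ)) := by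
    rw [e2, Complex.cpow_add _ _ hz0, Complex.cpow_intCast]
  rw [e1, e3, Complex.cpow_add _ _ h10, Complex.cpow_natCast, Complex.cpow_neg,
    Complex.cpow_neg, Nat.choose_symm_add, Nat.add_choose, Nat.cast_div (Nat.factorial_mul_factorial_dvd_factorial_add j k)
      (by exact_mod_cast (Nat.mul_pos j.factorial_pos k.factorial_pos).ne')]
  have hzr : z ^ (ρ : ℂ) ≠ 0 := by simp [Complex.cpow_eq_zero_iff, hz0]
  have hwr : (1 - z * w) ^ (κ : ℂ) ≠ 0 := by simp [Complex.cpow_eq_zero_iff, h10]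
  have e4 : (-w) ^ k = (-1) ^ k * w ^ k := neg_pow w k
  have e5 : ((-1 : ℂ) ^ k) * (-1) ^ k = 1 := by rw [← mul_pow]; simp
  rw [e4, one_pow, pow_add]
  generalize z ^ (ρ : ℂ) = A at *
  generalize (1 - z * w) ^ (κ : ℂ) = B at *
  generalize z ^ ((n : ℤ) - (j : ℤ)) = C at *
  have e6 : A⁻¹ * A = 1 := inv_mul_cancel₀ hzr
  have e7 : B⁻¹ * B = 1 := inv_mul_cancel₀ hwr
  simp only [div_eq_mul_inv, mul_inv, Nat.cast_mul]
  generalize (-1 : ℂ) ^ k = s at *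
  generalize (Complex.Gamma ((n : ℂ) + ρ - j + 1))⁻¹ = G1
  generalize (Complex.Gamma ((κ : ℂ) + j + 1))⁻¹ = G2
  generalize (-1 : ℂ) ^ j = t
  generalize A⁻¹ = A' at *
  generalize B⁻¹ = B' at *
  generalize ((j.factorial : ℂ))⁻¹ = f1
  generalize ((k.factorial : ℂ))⁻¹ = f2
  generalize (((j + k).factorial : ℂ)) = f3
  generalize Complex.Gamma ((n : ℂ) + ρ + 1) = g1
  generalize Complex.Gamma ((κ : ℂ) + (j + k : ℕ) + 1) = g2
  linear_combination (t * f3 * f1 * f2 * g1 * G1 * g2 * G2 * (1 - z * w) ^ j * C * w ^ k) *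
    (A' * A * (B' * B) * e5 + A' * A * e7 + e6)
end

section
/- Let κ > -1 and ρ > -1 be real, let m, n be nonnegative integers. For every z ∈ ℂ with z ≠ 0 and every w ∈ ℂ, the fractional Zernike function has the terminating Gauss hypergeometric representation Z^{κ,ρ}_{m,n}(z,w) = (κ+1)_m · z^{n-m} · Σ_{j=0}^{m} [((-m)_j (n+κ+ρ+1)_j) / ((κ+1)_j · j!)] · (1-zw)^j, i.e. Z^{κ,ρ}_{m,n}(z,w) = (κ+1)_m z^{n-m} ₂F₁(-m, n+κ+ρ+1; κ+1; 1-zw), where z^{n-m} is an integer power. -/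
open Complex Finset

/-- The rising factorial (Pochhammer symbol) `(x)_j`. -/
noncomputable def poch (x : ℂ) (j : ℕ) : ℂ := (ascPochhammer ℂ j).eval x


lemma poch_succ (x : ℂ) (j : ℕ) : poch x (j + 1) = poch x j * (x + j) :=
  ascPochhammer_succ_eval j x

lemma poch_add (x : ℂ) (i j : ℕ) : poch x (i + j) = poch x i * poch (x + i) j := by
  unfold poch
  rw [← ascPochhammer_mul]
  simp

lemma smeval_desc (x : ℂ) (j : ℕ) :
    (descPochhammer ℤ j).smeval x = poch (x - j + 1) j := by
  unfold poch
  rw [← descPochhammer_eval_eq_ascPochhammer, ← descPochhammer_map (Int.castRingHom ℂ),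
    Polynomial.eval_map, ← Polynomial.eval₂_smulOneHom_eq_smeval]
  congr 1
  exact RingHom.ext_int _ _

/-- Chu-Vandermonde in the form needed here. -/
lemma vand (a κ : ℂ) (k : ℕ) :
    ∑ j ∈ range (k + 1), (k.choose j : ℂ) * poch (a - j + 1) j * poch (κ + j + 1) (k - j)
      = poch (a + κ + 1) k := by
  have h := Ring.descPochhammer_smeval_add (r := a) (s := κ + k) k (Commute.all _ _)
  rw [Finset.Nat.sum_antidiagonal_eq_sum_range_succ_mk] at h
  simp only [smeval_desc] at h
  rw [show a + κ + 1 = a + (κ + k) - k + 1 by ring, h]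
  refine Finset.sum_congr rfl fun j hj => ?_
  have hj' : j ≤ k := by simpa [Nat.lt_succ_iff] using hj
  rw [Nat.cast_sub hj']
  rw [show κ + k - ((k : ℂ) - j) + 1 = κ + j + 1 by ring]
  simp [mul_assoc]

lemma desc_succ (a : ℂ) (j : ℕ) :
    poch (a - (j + 1 : ℕ) + 1) (j + 1) = poch (a - j + 1) j * (a - j) := by
  unfold poch
  rw [← descPochhammer_eval_eq_ascPochhammer, ← descPochhammer_eval_eq_ascPochhammer,
    descPochhammer_succ_eval]

lemma gamma_desc (a : ℂ) (h : Gamma (a + 1) ≠ 0) (j : ℕ) :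
    Gamma (a + 1) * (Gamma (a - j + 1))⁻¹ = poch (a - j + 1) j := by
  induction j with
  | zero => simp [poch, h]
  | succ j ih =>
    rw [desc_succ, ← ih, one_div_Gamma_eq_self_mul_one_div_Gamma_add_one]
    push_cast
    rw [show a - (j + 1 : ℂ) + 1 = a - j by ring]
    ring

lemma gamma_asc (x : ℂ) (h : 0 < x.re) (d : ℕ) :
    Gamma (x + d) = poch x d * Gamma x := by
  induction d with
  | zero => simp [poch]
  | succ d ih =>
    have hx : x + d ≠ 0 := by
      intro h0
      have := congrArg Complex.re h0
      simp at this
      have : (0 : ℝ) ≤ d := Nat.cast_nonneg d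
      linarith
    rw [poch_succ]
    push_cast
    rw [← add_assoc, Gamma_add_one _ hx, ih]
    ring

lemma poly_id (a κ t : ℂ) (m : ℕ) :
    ∑ j ∈ range (m + 1), (-1 : ℂ) ^ j * (m.choose j : ℂ) * poch (a - j + 1) j *
        poch (κ + j + 1) (m - j) * t ^ j * (1 - t) ^ (m - j)
      = ∑ k ∈ range (m + 1), (-1 : ℂ) ^ k * (m.choose k : ℂ) * poch (a + κ + 1) k *
        poch (κ + k + 1) (m - k) * t ^ k := by
  have e : ∀ j ∈ range (m + 1), (1 - t) ^ (m - j)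
      = ∑ k ∈ Ico j (m + 1), ((m - j).choose (k - j) : ℂ) * (-t) ^ (k - j) := by
    intro j hj
    have hj' : j ≤ m := by simpa [Nat.lt_succ_iff] using hj
    rw [Finset.sum_Ico_eq_sum_range, sub_eq_neg_add, add_pow,
      show m + 1 - j = m - j + 1 by omega]
    refine Finset.sum_congr rfl fun i _ => ?_
    simp [mul_comm]
  rw [Finset.sum_congr rfl fun j hj => by rw [e j hj, Finset.mul_sum]]
  rw [Finset.sum_comm' (t' := range (m + 1)) (s' := fun k => range (k + 1))
    (by intro x y; simp only [mem_range, mem_Ico]; omega)]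
  refine Finset.sum_congr rfl fun k hk => ?_
  have hk' : k ≤ m := by simpa [Nat.lt_succ_iff] using hk
  rw [← vand, Finset.mul_sum, Finset.sum_mul, Finset.sum_mul]
  refine Finset.sum_congr rfl fun j hj => ?_
  have hj' : j ≤ k := by simpa [Nat.lt_succ_iff] using hj
  have hc : (m.choose k : ℂ) * (k.choose j : ℂ) = (m.choose j : ℂ) * ((m - j).choose (k - j) : ℂ) := by
    exact_mod_cast Nat.choose_mul (n := m) (k := k) (s := j) hj'
  have hp : poch (κ + j + 1) (m - j) = poch (κ + j + 1) (k - j) * poch (κ + k + 1) (m - k) := by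
    rw [show m - j = (k - j) + (m - k) by omega, poch_add, Nat.cast_sub hj']
    congr 2
    ring
  have ht : t ^ k = t ^ j * t ^ (k - j) := by rw [← pow_add]; congr 1; omega
  have hs : (-1 : ℂ) ^ k = (-1) ^ j * (-1) ^ (k - j) := by rw [← pow_add]; congr 1; omega
  rw [hp, ht, hs, neg_pow t]
  linear_combination (-((-1) ^ j * (-1) ^ (k - j) * poch (a - j + 1) j * poch (κ + j + 1) (k - j)
    * poch (κ + k + 1) (m - k) * t ^ j * t ^ (k - j))) * hc

/-- Terminating Gauss hypergeometric representation of the fractional Zernike functions: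
`Z^{κ,ρ}_{m,n}(z,w) = (κ+1)_m z^{n-m} ₂F₁(-m, n+κ+ρ+1; κ+1; 1-zw)`. -/
theorem fracZernike_hypergeometric (κ ρ : ℝ) (hκ : -1 < κ) (hρ : -1 < ρ) (m n : ℕ)
    (z : ℂ) (hz : z ≠ 0) (w : ℂ) :
    fracZernike κ ρ m n z w
      = poch ((κ : ℂ) + 1) m * z ^ ((n : ℤ) - (m : ℤ)) *
          ∑ j ∈ Finset.range (m + 1),
            poch (-(m : ℂ)) j * poch ((n : ℂ) + κ + ρ + 1) j /
              (poch ((κ : ℂ) + 1) j * (Nat.factorial j : ℂ)) * (1 - z * w) ^ j := by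
  have hre : ∀ i : ℕ, 0 < ((κ : ℂ) + i + 1).re := by
    intro i
    have : (0 : ℝ) ≤ i := Nat.cast_nonneg i
    simp
    linarith
  have hG : ∀ i : ℕ, Gamma ((κ : ℂ) + i + 1) ≠ 0 := fun i => Gamma_ne_zero_of_re_pos (hre i)
  have hGa : Gamma ((n : ℂ) + ρ + 1) ≠ 0 := by
    apply Gamma_ne_zero_of_re_pos
    have : (0 : ℝ) ≤ n := Nat.cast_nonneg n
    simp
    linarith
  have hre0 : 0 < ((κ : ℂ) + 1).re := by simpa using hre 0
  have hp0 : ∀ i : ℕ, poch ((κ : ℂ) + 1) i ≠ 0 := by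
    intro i h0
    have := gamma_asc _ hre0 i
    rw [h0, zero_mul, add_right_comm] at this
    exact hG i this
  have hfac : ∀ j ≤ m, (m.factorial : ℂ) = m.choose j * j.factorial * (m - j).factorial := by
    intro j hj
    exact_mod_cast (Nat.choose_mul_factorial_mul_factorial hj).symm
  have hf0 : ∀ i : ℕ, (i.factorial : ℂ) ≠ 0 := fun i => by exact_mod_cast i.factorial_ne_zero
  have key := poly_id ((n : ℂ) + ρ) κ (1 - z * w) m
  have hL : fracZernike κ ρ m n z w = z ^ ((n : ℤ) - (m : ℤ)) *
      ∑ j ∈ range (m + 1), (-1 : ℂ) ^ j * (m.choose j : ℂ) * poch ((n : ℂ) + ρ - j + 1) j *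
        poch ((κ : ℂ) + j + 1) (m - j) * (1 - z * w) ^ j * (1 - (1 - z * w)) ^ (m - j) := by
    unfold fracZernike
    rw [Finset.mul_sum]
    refine Finset.sum_congr rfl fun j hj => ?_
    have hj' : j ≤ m := by simpa [Nat.lt_succ_iff] using hj
    have hg : Gamma ((κ : ℂ) + m + 1) = poch ((κ : ℂ) + j + 1) (m - j) * Gamma ((κ : ℂ) + j + 1) := by
      rw [← gamma_asc _ (hre j), Nat.cast_sub hj']
      congr 1
      ring
    have hz' : z ^ ((n : ℤ) - (j : ℤ)) = z ^ ((n : ℤ) - (m : ℤ)) * z ^ (m - j) := by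
      rw [← zpow_natCast z (m - j), ← zpow_add₀ hz, Nat.cast_sub hj']
      congr 1
      ring
    rw [sub_sub_cancel, mul_pow, ← gamma_desc _ hGa j, hg, hz', hfac j hj']
    have h1 := hf0 j
    have h2 := hf0 (m - j)
    have h3 := hG j
    generalize Gamma ((κ : ℂ) + j + 1) = g at *
    rw [div_eq_mul_inv, mul_inv, mul_inv, mul_inv]
    generalize (Gamma ((n : ℂ) + ρ - j + 1))⁻¹ = g'
    field_simp
  rw [hL, key, mul_comm (poch _ _), mul_assoc]
  congr 1
  rw [Finset.mul_sum]
  refine Finset.sum_congr rfl fun j hj => ?_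
  have hj' : j ≤ m := by simpa [Nat.lt_succ_iff] using hj
  have hm : poch (-(m : ℂ)) j = (-1) ^ j * (m.choose j * j.factorial) := by
    unfold poch
    rw [ascPochhammer_eval_neg_eq_descPochhammer, descPochhammer_eval_eq_descFactorial,
      Nat.descFactorial_eq_factorial_mul_choose]
    push_cast
    ring
  have hs : poch ((κ : ℂ) + 1) m = poch ((κ : ℂ) + 1) j * poch ((κ : ℂ) + j + 1) (m - j) := by
    conv_lhs => rw [show m = j + (m - j) by omega, poch_add]
    congr 2
    ring
  have h1 := hf0 j
  have h2 := hp0 j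
  rw [hm, hs, show (n : ℂ) + κ + ρ + 1 = n + ρ + κ + 1 by ring]
  field_simp
end

section
/- Let κ > -1 and let ρ > -1 be real and not an integer, and let m, n be nonnegative integers. Then for every z ∈ ℂ with z ≠ 0 and every w ∈ ℂ, the fractional Zernike function is the following finite combination of classical complex Zernike (disc) polynomials: Z^{κ,ρ}_{m,n}(z,w) = (m! Γ(ρ+1) / (κ+m+1)_n) · Σ_{j=0}^{m} [(-1)^j / (j! (m-j)! Γ(ρ-j+1))] · ((1-zw)/z)^j · 𝒵^{κ+j}_{m-j,n}(z,w). -/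
open Complex Finset

/-- The classical complex Zernike (disc) polynomial `𝒵^γ_{m,n}(z,w) = (γ+m+1)_n Z^{γ,0}_{m,n}(z,w)`. -/
noncomputable def discZernike (γ : ℝ) (m n : ℕ) (z w : ℂ) : ℂ :=
  poch ((γ : ℂ) + m + 1) n * fracZernike γ 0 m n z w

/-- falling factorial -/
noncomputable def ff (k : ℕ) (x : ℂ) : ℂ := (descPochhammer ℤ k).smeval x

lemma ff_zero (x : ℂ) : ff 0 x = 1 := by
  simp [ff]

lemma ff_succ (k : ℕ) (x : ℂ) : ff (k + 1) x = ff k x * (x - k) := by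
  unfold ff
  rw [descPochhammer_succ_right, Polynomial.smeval_mul, Polynomial.smeval_sub,
    Polynomial.smeval_X, Polynomial.smeval_natCast]
  simp

lemma ff_eq_gamma (x : ℂ) (hx : 0 < (x + 1).re) (k : ℕ) :
    Complex.Gamma (x + 1) / Complex.Gamma (x - k + 1) = ff k x := by
  induction k with
  | zero =>
    rw [ff_zero]
    simpa using div_self (Complex.Gamma_ne_zero_of_re_pos hx)
  | succ k ih =>
    rw [ff_succ, ← ih]
    have e : x - ((k + 1 : ℕ) : ℂ) + 1 = x - k := by push_cast; ring
    rw [e]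
    by_cases h : x - k = 0
    · rw [h]; simp [Complex.Gamma_zero]
    · rw [Complex.Gamma_add_one _ h]
      field_simp

lemma ff_vandermonde (x y : ℂ) (k : ℕ) :
    ff k (x + y) / (Nat.factorial k : ℂ) = ∑ j ∈ Finset.range (k + 1),
      ff j x / (Nat.factorial j : ℂ) * (ff (k - j) y / (Nat.factorial (k - j) : ℂ)) := by
  unfold ff
  rw [Ring.descPochhammer_smeval_add k (Commute.all x y),
    Finset.Nat.sum_antidiagonal_eq_sum_range_succ_mk, Finset.sum_div]
  refine Finset.sum_congr rfl fun j hj => ?_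
  have hj' : j ≤ k := by simpa [Nat.lt_succ_iff] using hj
  have h1 : ((k.choose j : ℕ) : ℂ) = k.factorial / (j.factorial * (k - j).factorial) :=
    Nat.cast_choose ℂ hj'
  have hk : (k.factorial : ℂ) ≠ 0 := by exact_mod_cast k.factorial_ne_zero
  have hk1 : (j.factorial : ℂ) ≠ 0 := by exact_mod_cast j.factorial_ne_zero
  have hk2 : ((k - j).factorial : ℂ) ≠ 0 := by exact_mod_cast (k - j).factorial_ne_zero
  simp only [h1]
  field_simp

lemma frac_eq (κ ρ : ℝ) (hρ : -1 < ρ) (m n : ℕ) (z w : ℂ) :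
    fracZernike κ ρ m n z w = ∑ j ∈ Finset.range (m + 1),
      (-1 : ℂ) ^ j * (Nat.factorial m : ℂ) * Complex.Gamma ((κ : ℂ) + m + 1) /
      ((Nat.factorial (m - j) : ℂ) * Complex.Gamma ((κ : ℂ) + j + 1)) *
      (ff j ((n : ℂ) + ρ) / (Nat.factorial j : ℂ)) *
      (1 - z * w) ^ j * z ^ ((n : ℤ) - (j : ℤ)) * w ^ (m - j) := by
  unfold fracZernike
  refine Finset.sum_congr rfl fun j _ => ?_
  rw [← ff_eq_gamma _ _ j]
  · congr 3
    simp only [div_eq_mul_inv, mul_inv]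
    ring
  · simp
    have : (0 : ℝ) ≤ n := n.cast_nonneg
    linarith

lemma poch_ne (x : ℂ) (hx : 0 < x.re) (n : ℕ) : poch x n ≠ 0 := by
  induction n with
  | zero => simp [poch]
  | succ n ih =>
    unfold poch at *
    rw [ascPochhammer_succ_eval]
    refine mul_ne_zero ih fun h => ?_
    have := congrArg Complex.re h
    simp at this
    have : (0 : ℝ) ≤ n := n.cast_nonneg
    linarith

/-- For non-integer `ρ`, the fractional Zernike function is a finite combination of classical
complex Zernike (disc) polynomials. -/
theorem fracZernike_eq_comb_discZernike (κ ρ : ℝ) (hκ : -1 < κ) (hρ : -1 < ρ)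
    (hρint : ∀ k : ℤ, ρ ≠ (k : ℝ)) (m n : ℕ) (z : ℂ) (hz : z ≠ 0) (w : ℂ) :
    fracZernike κ ρ m n z w
      = (Nat.factorial m : ℂ) * Complex.Gamma ((ρ : ℂ) + 1) / poch ((κ : ℂ) + m + 1) n *
          ∑ j ∈ Finset.range (m + 1),
            (-1 : ℂ) ^ j /
                ((Nat.factorial j : ℂ) * (Nat.factorial (m - j) : ℂ) *
                  Complex.Gamma ((ρ : ℂ) - j + 1)) *
              ((1 - z * w) / z) ^ j * discZernike (κ + j) (m - j) n z w := by
  have hR : ∀ j ∈ Finset.range (m + 1), (-1 : ℂ) ^ j /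
                ((Nat.factorial j : ℂ) * (Nat.factorial (m - j) : ℂ) *
                  Complex.Gamma ((ρ : ℂ) - j + 1)) *
              ((1 - z * w) / z) ^ j * discZernike (κ + j) (m - j) n z w =
      poch ((κ : ℂ) + m + 1) n * ∑ i ∈ Finset.range (m + 1 - j),
        (-1 : ℂ) ^ (j + i) * Complex.Gamma ((κ : ℂ) + m + 1) /
        ((Nat.factorial (m - (j + i)) : ℂ) * Complex.Gamma ((κ : ℂ) + (j + i : ℕ) + 1)) *
        (1 / Complex.Gamma ((ρ : ℂ) - j + 1) / (Nat.factorial j : ℂ) *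
          (ff i (n : ℂ) / (Nat.factorial i : ℂ))) *
        (1 - z * w) ^ (j + i) * z ^ ((n : ℤ) - ((j + i : ℕ) : ℤ)) * w ^ (m - (j + i)) := by
    intro j hj
    have hj' : j ≤ m := by simpa [Nat.lt_succ_iff] using hj
    unfold discZernike
    rw [frac_eq _ _ (by norm_num)]
    have e1 : ((κ + j : ℝ) : ℂ) + ((m - j : ℕ) : ℂ) + 1 = (κ : ℂ) + m + 1 := by
      push_cast [Nat.cast_sub hj']; ring
    rw [e1, mul_left_comm, Finset.mul_sum, Nat.sub_add_comm hj']
    congr 1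
    refine Finset.sum_congr rfl fun i _ => ?_
    have e2 : ((κ + j : ℝ) : ℂ) + i + 1 = (κ : ℂ) + (j + i : ℕ) + 1 := by push_cast; ring
    have e3 : (n : ℤ) - ((j + i : ℕ) : ℤ) = ((n : ℤ) - i) - j := by push_cast; ring
    have hk2 : ((m - j).factorial : ℂ) ≠ 0 := by exact_mod_cast (m - j).factorial_ne_zero
    rw [e2, e3, zpow_sub₀ hz _ (j : ℤ), zpow_natCast, Nat.sub_sub, div_pow, pow_add, pow_add]
    simp only [Complex.ofReal_zero, add_zero, div_eq_mul_inv, mul_inv]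
    have := mul_inv_cancel₀ hk2
    linear_combination (((-1 : ℂ) ^ j * (-1) ^ i * Complex.Gamma ((κ : ℂ) + m + 1) *
        ((Nat.factorial (m - (j + i)) : ℂ)⁻¹ * (Complex.Gamma ((κ : ℂ) + (j + i : ℕ) + 1))⁻¹) *
        ((Complex.Gamma ((ρ : ℂ) - j + 1))⁻¹ * (Nat.factorial j : ℂ)⁻¹ *
          (ff i (n : ℂ) * (Nat.factorial i : ℂ)⁻¹)) *
        ((1 - z * w) ^ j * (1 - z * w) ^ i) * (z ^ ((n : ℤ) - (i : ℤ)) * (z ^ j)⁻¹)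
          * w ^ (m - (j + i)))) * this
  have hp : poch ((κ : ℂ) + m + 1) n ≠ 0 := by
    apply poch_ne
    simp
    have : (0 : ℝ) ≤ m := m.cast_nonneg
    linarith
  rw [Finset.sum_congr rfl hR, ← Finset.mul_sum, ← mul_assoc, div_mul_cancel₀ _ hp,
    ← Finset.sum_range_diag_flip (m + 1) (fun j i =>
      (-1 : ℂ) ^ (j + i) * Complex.Gamma ((κ : ℂ) + m + 1) /
        ((Nat.factorial (m - (j + i)) : ℂ) * Complex.Gamma ((κ : ℂ) + (j + i : ℕ) + 1)) *
        (1 / Complex.Gamma ((ρ : ℂ) - j + 1) / (Nat.factorial j : ℂ) *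
          (ff i (n : ℂ) / (Nat.factorial i : ℂ))) *
        (1 - z * w) ^ (j + i) * z ^ ((n : ℤ) - ((j + i : ℕ) : ℤ)) * w ^ (m - (j + i))),
    frac_eq _ _ hρ, Finset.mul_sum]
  refine Finset.sum_congr rfl fun k _ => ?_
  rw [add_comm (n : ℂ) (ρ : ℂ), ff_vandermonde]
  simp only [Finset.mul_sum, Finset.sum_mul]
  refine Finset.sum_congr rfl fun j hj => ?_
  have hj' : j ≤ k := by simpa [Nat.lt_succ_iff] using hj
  rw [← ff_eq_gamma (ρ : ℂ) (by simp; linarith) j, Nat.add_sub_cancel' hj']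
  simp only [div_eq_mul_inv, mul_inv]
  ring
end

section
/- Let α, β, γ, η be real and m, n nonnegative integers, and set κ := α - 2(γ+m) - 1 and ρ := β - 2η; assume κ > -1 and ρ > -1. On the open set U := {(z,w) ∈ ℂ² : z ≠ 0, w ≠ 0, zw ∉ (-∞,0], 1-zw ∉ (-∞,0]}, define Ψ(z,w) := (zw)^{-η} (1-zw)^{-(γ+m+1)} Z^{κ,ρ}_{m,n}(z,w) with principal-branch powers (this is the two-variable version of the β-restricted Zernike function ψ^{γ,η}_{m,n}). Then, with H₁(t) := (γ+1) + η - η/t and H₂(t) := (γ-α-1) + (η-β) - (η-β)/t, at every point (z,w) ∈ U the following eigenvalue equation for the perturbed magnetic Laplacian holds: -(1-zw)² ∂²Ψ/∂z∂w + (1-zw)·(H₁(zw)·z·∂Ψ/∂z - H₂(zw)·w·∂Ψ/∂w) + H₁(zw)·H₂(zw)·zw·Ψ + (α-γ+1)·Ψ = (m+1)(α-2γ-m)·Ψ, where ∂/∂z and ∂/∂w denote complex partial derivatives in the respective variable with the other held fixed. -/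
open Complex Finset

/-- The two-variable version of the β-restricted Zernike function `ψ^{γ,η}_{m,n}`. -/
noncomputable def psiTwoVar (α β γ η : ℝ) (m n : ℕ) (z w : ℂ) : ℂ :=
  (z * w) ^ (-(η : ℂ)) * (1 - z * w) ^ (-((γ : ℂ) + m + 1)) *
    fracZernike (α - 2 * (γ + m) - 1) (β - 2 * η) m n z w

/-- The potential-type function `H_a^b(t) = a + b - b/t`. -/
noncomputable def Hpot (a b : ℝ) (t : ℂ) : ℂ := (a : ℂ) + b - (b : ℂ) / t

/-- a single summand without its coefficient -/
noncomputable def termF (a b : ℂ) (j : ℕ) (k : ℤ) (l : ℕ) (z w : ℂ) : ℂ :=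
  (z * w) ^ a * (1 - z * w) ^ b * ((1 - z * w) ^ j * z ^ k * w ^ l)

theorem termF_dw (a b : ℂ) (j : ℕ) (k : ℤ) (l : ℕ) (z w : ℂ) (hz : z ≠ 0) (hw : w ≠ 0)
    (h0 : z * w ∈ slitPlane) (h1 : 1 - z * w ∈ slitPlane) :
    HasDerivAt (fun w' => termF a b j k l z w')
      (termF a b j k l z w * ((a + l) / w - (b + j) * (z / (1 - z * w)))) w := by
  have e0 : HasDerivAt (fun w' : ℂ => z * w') z w := by
    simpa using (hasDerivAt_id w).const_mul z
  have e1 : HasDerivAt (fun w' : ℂ => 1 - z * w') (-z) w := by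
    simpa using e0.const_sub 1
  have hs : 1 - z * w ≠ 0 := slitPlane_ne_zero h1
  have ht : z * w ≠ 0 := mul_ne_zero hz hw
  have d := ((e0.cpow_const (c := a) h0).mul (e1.cpow_const (c := b) h1)).mul
    (((e1.pow j).mul_const (z ^ k)).mul (hasDerivAt_pow l w))
  refine d.congr_deriv ?_
  have pj : (j : ℂ) * (1 - z * w) ^ (j - 1) = j * ((1 - z * w) ^ j / (1 - z * w)) := by
    rcases j with _ | j
    · simp
    · field_simp; simp; ring
  have pl : (l : ℂ) * w ^ (l - 1) = l * (w ^ l / w) := by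
    rcases l with _ | l
    · simp
    · field_simp; simp; ring
  simp only [Pi.mul_apply, Pi.pow_apply]
  rw [pj, pl, cpow_sub _ _ ht, cpow_sub _ _ hs, cpow_one, cpow_one]
  unfold termF
  field_simp
  ring

theorem termF_dz (a b : ℂ) (j : ℕ) (k : ℤ) (l : ℕ) (z w : ℂ) (hz : z ≠ 0) (hw : w ≠ 0)
    (h0 : z * w ∈ slitPlane) (h1 : 1 - z * w ∈ slitPlane) :
    HasDerivAt (fun z' => termF a b j k l z' w)
      (termF a b j k l z w * ((a + k) / z - (b + j) * (w / (1 - z * w)))) z := by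
  have e0 : HasDerivAt (fun z' : ℂ => z' * w) w z := by
    simpa using (hasDerivAt_id z).mul_const w
  have e1 : HasDerivAt (fun z' : ℂ => 1 - z' * w) (-w) z := by
    simpa using e0.const_sub 1
  have hs : 1 - z * w ≠ 0 := slitPlane_ne_zero h1
  have ht : z * w ≠ 0 := mul_ne_zero hz hw
  have d := ((e0.cpow_const (c := a) h0).mul (e1.cpow_const (c := b) h1)).mul
    (((e1.pow j).mul (hasDerivAt_zpow k z (Or.inl hz))).mul_const (w ^ l))
  refine d.congr_deriv ?_
  have pj : (j : ℂ) * (1 - z * w) ^ (j - 1) = j * ((1 - z * w) ^ j / (1 - z * w)) := by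
    rcases j with _ | j
    · simp
    · field_simp; simp; ring
  simp only [Pi.mul_apply, Pi.pow_apply]
  rw [pj, zpow_sub_one₀ hz, cpow_sub _ _ ht, cpow_sub _ _ hs, cpow_one, cpow_one]
  unfold termF
  generalize z ^ k = Z
  field_simp
  ring

theorem termF_dzw (a b : ℂ) (j : ℕ) (k : ℤ) (l : ℕ) (z w : ℂ) (hz : z ≠ 0) (hw : w ≠ 0)
    (h0 : z * w ∈ slitPlane) (h1 : 1 - z * w ∈ slitPlane) :
    HasDerivAt (fun z' => termF a b j k l z' w *
        ((a + l) / w - (b + j) * (z' / (1 - z' * w))))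
      (termF a b j k l z w * (((a + k) / z - (b + j) * (w / (1 - z * w))) *
        ((a + l) / w - (b + j) * (z / (1 - z * w))) - (b + j) / (1 - z * w) ^ 2)) z := by
  have e0 : HasDerivAt (fun z' : ℂ => z' * w) w z := by
    simpa using (hasDerivAt_id z).mul_const w
  have e1 : HasDerivAt (fun z' : ℂ => 1 - z' * w) (-w) z := by
    simpa using e0.const_sub 1
  have hs : 1 - z * w ≠ 0 := slitPlane_ne_zero h1
  have d := (termF_dz a b j k l z w hz hw h0 h1).mul
    ((((hasDerivAt_id z).div e1 hs).const_mul (b + j)).const_sub ((a + l) / w))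
  refine d.congr_deriv ?_
  simp only [id, Pi.div_apply]
  generalize termF a b j k l z w = T
  field_simp
  ring

/-- the coefficients -/
noncomputable def coefZ (κ ρ : ℝ) (m n j : ℕ) : ℂ :=
    ((-1 : ℂ) ^ j * (Nat.factorial m : ℂ) * Complex.Gamma ((n : ℂ) + ρ + 1) *
        Complex.Gamma ((κ : ℂ) + m + 1) /
      ((Nat.factorial j : ℂ) * (Nat.factorial (m - j) : ℂ) *
        Complex.Gamma ((n : ℂ) + ρ - j + 1) * Complex.Gamma ((κ : ℂ) + j + 1)))

theorem coefZ_succ (κ ρ : ℝ) (m n j : ℕ) (hj : j < m) :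
    coefZ κ ρ m n (j + 1) * ((j + 1) * (κ + j + 1)) =
      -(((m : ℂ) - j) * (n + ρ - j)) * coefZ κ ρ m n j := by
  obtain ⟨d, rfl⟩ : ∃ d, m = j + 1 + d := ⟨m - (j + 1), by omega⟩
  have g1 := one_div_Gamma_eq_self_mul_one_div_Gamma_add_one ((n : ℂ) + ρ - j)
  have g2 := one_div_Gamma_eq_self_mul_one_div_Gamma_add_one ((κ : ℂ) + j + 1)
  have s1 : j + 1 + d - (j + 1) = d := by omega
  have s2 : j + 1 + d - j = d + 1 := by omega
  have a1 : (n : ℂ) + ρ - (j + 1 : ℕ) + 1 = n + ρ - j := by push_cast; ring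
  have a2 : (κ : ℂ) + (j + 1 : ℕ) + 1 = κ + j + 1 + 1 := by push_cast; ring
  unfold coefZ
  rw [s1, s2, a1, a2, Nat.factorial_succ j, Nat.factorial_succ d]
  simp only [div_eq_mul_inv, mul_inv]
  rw [g1, g2]
  have f1 : (Nat.factorial j : ℂ) ≠ 0 := by exact_mod_cast Nat.factorial_ne_zero _
  have f2 : (Nat.factorial d : ℂ) ≠ 0 := by exact_mod_cast Nat.factorial_ne_zero _
  have f3 : (j + 1 : ℂ) ≠ 0 := by exact_mod_cast Nat.succ_ne_zero j
  have f4 : (d + 1 : ℂ) ≠ 0 := by exact_mod_cast Nat.succ_ne_zero d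
  generalize (Gamma ((n : ℂ) + ρ - j + 1))⁻¹ = A
  generalize (Gamma ((κ : ℂ) + j + 1 + 1))⁻¹ = B
  push_cast
  field_simp
  ring

theorem psi_eq (α β γ η : ℝ) (m n : ℕ) (z w : ℂ) :
    psiTwoVar α β γ η m n z w = ∑ j ∈ Finset.range (m + 1),
      coefZ (α - 2 * (γ + m) - 1) (β - 2 * η) m n j *
        termF (-(η : ℂ)) (-((γ : ℂ) + m + 1)) j ((n : ℤ) - (j : ℤ)) (m - j) z w := by
  unfold psiTwoVar fracZernike
  rw [Finset.mul_sum]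
  refine Finset.sum_congr rfl fun j _ => ?_
  unfold coefZ termF
  ring

theorem termF_succ (a b : ℂ) (m n j : ℕ) (hj : j < m) (z w : ℂ) (hz : z ≠ 0) :
    z * w * termF a b (j + 1) ((n : ℤ) - ((j + 1 : ℕ) : ℤ)) (m - (j + 1)) z w =
      (1 - z * w) * termF a b j ((n : ℤ) - (j : ℤ)) (m - j) z w := by
  obtain ⟨d, rfl⟩ : ∃ d, m = j + 1 + d := ⟨m - (j + 1), by omega⟩
  have s1 : j + 1 + d - (j + 1) = d := by omega
  have s2 : j + 1 + d - j = d + 1 := by omega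
  have s3 : (n : ℤ) - ((j + 1 : ℕ) : ℤ) = (n : ℤ) - j - 1 := by push_cast; ring
  unfold termF
  rw [s1, s2, s3, zpow_sub_one₀ hz]
  generalize z ^ ((n : ℤ) - j) = Z
  field_simp
  ring

theorem term_alg (α β γ η m n j z w T : ℂ) (hz : z ≠ 0) (hw : w ≠ 0) (hs : 1 - z * w ≠ 0) :
    -(1 - z * w) ^ 2 * (T * (((-η + (n - j)) / z - (-(γ + m + 1) + j) * (w / (1 - z * w))) *
        ((-η + (m - j)) / w - (-(γ + m + 1) + j) * (z / (1 - z * w)))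
          - (-(γ + m + 1) + j) / (1 - z * w) ^ 2))
      + (1 - z * w) *
          ((γ + 1 + η - η / (z * w)) * z *
             (T * ((-η + (n - j)) / z - (-(γ + m + 1) + j) * (w / (1 - z * w))))
            - (γ - α - 1 + (η - β) - (η - β) / (z * w)) * w *
              (T * ((-η + (m - j)) / w - (-(γ + m + 1) + j) * (z / (1 - z * w)))))
      + (γ + 1 + η - η / (z * w)) * (γ - α - 1 + (η - β) - (η - β) / (z * w)) * (z * w) * T
      + (α - γ + 1) * T - (m + 1) * (α - 2 * γ - m) * T
    = -(j * (α - 2 * (γ + m) - 1 + j)) * T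
      - (m - j) * (n + (β - 2 * η) - j) * ((1 - z * w) / (z * w) * T) := by
  field_simp
  ring

/-- The β-restricted Zernike functions satisfy, in the two-variable picture, the eigenvalue
equation for the perturbed magnetic Laplacian
`L^{α,β,+}_{γ,η} = Δ^{γ-α-1,η-β}_{γ+1,η} + (α-γ+1)` with eigenvalue `(m+1)(α-2γ-m)`. -/
theorem psiTwoVar_eigen (α β γ η κ ρ : ℝ) (m n : ℕ)
    (hκdef : κ = α - 2 * (γ + m) - 1) (hρdef : ρ = β - 2 * η)
    (hκ : -1 < κ) (hρ : -1 < ρ) (z w : ℂ) (hz : z ≠ 0) (hw : w ≠ 0)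
    (hzw : ¬((z * w).re ≤ 0 ∧ (z * w).im = 0))
    (h1 : ¬((1 - z * w).re ≤ 0 ∧ (1 - z * w).im = 0)) :
    -(1 - z * w) ^ 2 *
        deriv (fun z' => deriv (fun w' => psiTwoVar α β γ η m n z' w') w) z
      + (1 - z * w) *
          (Hpot (γ + 1) η (z * w) * z * deriv (fun z' => psiTwoVar α β γ η m n z' w) z
            - Hpot (γ - α - 1) (η - β) (z * w) * w *
                deriv (fun w' => psiTwoVar α β γ η m n z w') w)
      + Hpot (γ + 1) η (z * w) * Hpot (γ - α - 1) (η - β) (z * w) * (z * w) *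
          psiTwoVar α β γ η m n z w
      + ((α : ℂ) - γ + 1) * psiTwoVar α β γ η m n z w
    = ((m : ℂ) + 1) * ((α : ℂ) - 2 * γ - m) * psiTwoVar α β γ η m n z w := by
  have h0 : z * w ∈ slitPlane := by
    rw [mem_slitPlane_iff]; by_contra hh; push Not at hh; exact hzw hh
  have h1' : 1 - z * w ∈ slitPlane := by
    rw [mem_slitPlane_iff]; by_contra hh; push Not at hh; exact h1 hh
  have hs : 1 - z * w ≠ 0 := slitPlane_ne_zero h1'
  have ht : z * w ≠ 0 := mul_ne_zero hz hw
  set c := coefZ (α - 2 * (γ + m) - 1) (β - 2 * η) m n with hc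
  set a : ℂ := -(η : ℂ) with ha
  set b : ℂ := -((γ : ℂ) + m + 1) with hb
  have Dw : ∀ z' : ℂ, z' ≠ 0 → z' * w ∈ slitPlane → 1 - z' * w ∈ slitPlane →
      deriv (fun w' => psiTwoVar α β γ η m n z' w') w = ∑ j ∈ Finset.range (m + 1),
        c j * (termF a b j ((n : ℤ) - (j : ℤ)) (m - j) z' w *
          ((a + (m - j : ℕ)) / w - (b + j) * (z' / (1 - z' * w)))) := by
    intro z' hz' i0 i1
    simp only [psi_eq]
    exact (HasDerivAt.fun_sum fun j _ =>
      (termF_dw a b j ((n : ℤ) - (j : ℤ)) (m - j) z' w hz' hw i0 i1).const_mul (c j)).deriv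
  have Dz : deriv (fun z' => psiTwoVar α β γ η m n z' w) z = ∑ j ∈ Finset.range (m + 1),
        c j * (termF a b j ((n : ℤ) - (j : ℤ)) (m - j) z w *
          ((a + ((n : ℤ) - (j : ℤ) : ℤ)) / z - (b + j) * (w / (1 - z * w)))) := by
    simp only [psi_eq]
    exact (HasDerivAt.fun_sum fun j _ =>
      (termF_dz a b j ((n : ℤ) - (j : ℤ)) (m - j) z w hz hw h0 h1').const_mul (c j)).deriv
  have Dzw : deriv (fun z' => deriv (fun w' => psiTwoVar α β γ η m n z' w') w) z =
      ∑ j ∈ Finset.range (m + 1),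
        c j * (termF a b j ((n : ℤ) - (j : ℤ)) (m - j) z w *
          (((a + ((n : ℤ) - (j : ℤ) : ℤ)) / z - (b + j) * (w / (1 - z * w))) *
            ((a + (m - j : ℕ)) / w - (b + j) * (z / (1 - z * w)))
              - (b + j) / (1 - z * w) ^ 2)) := by
    have c0 : ContinuousAt (fun z' : ℂ => z' * w) z := by fun_prop
    have c1 : ContinuousAt (fun z' : ℂ => 1 - z' * w) z := by fun_prop
    have ev : (fun z' => deriv (fun w' => psiTwoVar α β γ η m n z' w') w) =ᶠ[nhds z]
        fun z' => ∑ j ∈ Finset.range (m + 1),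
        c j * (termF a b j ((n : ℤ) - (j : ℤ)) (m - j) z' w *
          ((a + (m - j : ℕ)) / w - (b + j) * (z' / (1 - z' * w)))) := by
      filter_upwards [isOpen_ne.mem_nhds hz,
        c0.preimage_mem_nhds (isOpen_slitPlane.mem_nhds h0),
        c1.preimage_mem_nhds (isOpen_slitPlane.mem_nhds h1')] with z' q1 q2 q3
      exact Dw z' q1 q2 q3
    rw [ev.deriv_eq]
    exact (HasDerivAt.fun_sum fun j _ =>
      (termF_dzw a b j ((n : ℤ) - (j : ℤ)) (m - j) z w hz hw h0 h1').const_mul (c j)).deriv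
  rw [Dzw, Dz, Dw z hz h0 h1', psi_eq, ← sub_eq_zero, ← hc, ← ha, ← hb]
  have key : ∑ j ∈ Finset.range (m + 1),
      (-(j * ((α : ℂ) - 2 * (γ + m) - 1 + j)) *
          (c j * termF a b j ((n : ℤ) - (j : ℤ)) (m - j) z w)
        - ((m : ℂ) - j) * (n + (β - 2 * η) - j) *
          ((1 - z * w) / (z * w) * (c j * termF a b j ((n : ℤ) - (j : ℤ)) (m - j) z w))) = 0 := by
    rw [Finset.sum_sub_distrib, Finset.sum_range_succ', Finset.sum_range_succ _ m, sub_eq_zero]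
    simp only [Nat.cast_zero, zero_mul, neg_zero, add_zero, sub_self]
    refine Finset.sum_congr rfl fun j hj => ?_
    have hj' := Finset.mem_range.mp hj
    have r1 := coefZ_succ (α - 2 * (γ + m) - 1) (β - 2 * η) m n j hj'
    have r2 := termF_succ a b m n j hj' z w hz
    have r3 : termF a b (j + 1) ((n : ℤ) - ((j + 1 : ℕ) : ℤ)) (m - (j + 1)) z w =
        (1 - z * w) / (z * w) * termF a b j ((n : ℤ) - (j : ℤ)) (m - j) z w := by
      rw [div_mul_eq_mul_div, eq_div_iff ht, ← r2]; ring
    rw [r3]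
    rw [← hc] at r1
    push_cast at r1 ⊢
    linear_combination (-((1 - z * w) / (z * w) * termF a b j ((n : ℤ) - (j : ℤ)) (m - j) z w)) * r1
  rw [← key]
  simp only [Finset.mul_sum, ← Finset.sum_add_distrib, ← Finset.sum_sub_distrib]
  refine Finset.sum_congr rfl fun j hj => ?_
  have hj' : j ≤ m := Nat.lt_succ_iff.mp (Finset.mem_range.mp hj)
  have al := term_alg α β γ η m n j z w
    (c j * termF a b j ((n : ℤ) - (j : ℤ)) (m - j) z w) hz hw hs
  rw [← al, ha, hb]
  unfold Hpot
  push_cast [Nat.cast_sub hj']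
  ring
end

section
/- Let α, β, γ, η be real numbers, w ∈ ℂ a fixed parameter, and U ⊆ {u ∈ ℂ : uw ∉ (-∞,0], 1-uw ∉ (-∞,0]} open. For real a, b set h_{a,b}(u) := (1-uw)^a (uw)^b (principal-branch powers) and, for j = 1, …, m, define the first-order operators (A*_j f)(u) := -h_{γ+j-α, η-β}(u) · d/du[h_{α-γ-j+1, β-η} · f](u). Then for every f analytic on U, every positive integer m, and every z ∈ U, the m-fold composition has the closed Rodrigues-type expression (A*_1 ∘ A*_2 ∘ ⋯ ∘ A*_m f)(z) = (-1)^m · h_{γ-α+m, η-β}(z) · D^m[h_{α-γ, β-η} · f](z), where D^m denotes the m-th complex derivative in u. -/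
open Complex

/-- The weight function `h_{a,b}(u) = (1-uw)^a (uw)^b` (with `w` a fixed parameter playing the
role of the conjugate variable). -/
noncomputable def hpow (w : ℂ) (a b : ℝ) (u : ℂ) : ℂ := (1 - u * w) ^ (a : ℂ) * (u * w) ^ (b : ℂ)

/-- The creation-type operator `A*_j f = -h_{γ+j-α,η-β} d/du (h_{α-γ-j+1,β-η} f)`. -/
noncomputable def opAstarJ (α β γ η : ℝ) (w : ℂ) (j : ℕ) (f : ℂ → ℂ) (u : ℂ) : ℂ :=
  -hpow w (γ + j - α) (η - β) u *
    deriv (fun u' => hpow w (α - γ - j + 1) (β - η) u' * f u') u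

/-- The `m`-fold composition `A*_1 ∘ A*_2 ∘ ⋯ ∘ A*_m`. -/
noncomputable def opAstarIter (α β η : ℝ) (w : ℂ) : ℝ → ℕ → (ℂ → ℂ) → ℂ → ℂ
  | _, 0, f => f
  | γ, (k + 1), f => opAstarJ α β γ η w 1 (opAstarIter α β η w (γ + 1) k f)

lemma hpow_mul_hpow (w : ℂ) (a b c d : ℝ) (u : ℂ) (h0 : u * w ≠ 0) (h1 : 1 - u * w ≠ 0) :
    hpow w a b u * hpow w c d u = hpow w (a + c) (b + d) u := by
  simp only [hpow]
  push_cast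
  rw [Complex.cpow_add _ _ h0, Complex.cpow_add _ _ h1]
  ring

lemma hpow_nat_zero (w : ℂ) (k : ℕ) (u : ℂ) : hpow w k 0 u = (1 - u * w) ^ k := by
  simp [hpow]

lemma hpow_analytic (w : ℂ) (a b : ℝ) (u : ℂ) (h0 : u * w ∈ slitPlane)
    (h1 : 1 - u * w ∈ slitPlane) : AnalyticAt ℂ (hpow w a b) u := by
  have e0 : AnalyticAt ℂ (fun u : ℂ => u * w) u := by fun_prop
  have e1 : AnalyticAt ℂ (fun u : ℂ => 1 - u * w) u := by fun_prop
  exact (e1.cpow analyticAt_const h1).mul (e0.cpow analyticAt_const h0)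

lemma hasDerivAt_v (w u : ℂ) : HasDerivAt (fun u : ℂ => 1 - u * w) (-w) u := by
  simpa using ((hasDerivAt_id u).mul_const w).const_sub 1

lemma iter_hasDeriv (U : Set ℂ) (G : ℂ → ℂ) (hG : AnalyticOnNhd ℂ G U)
    (k : ℕ) (z : ℂ) (hz : z ∈ U) :
    HasDerivAt (iteratedDeriv k G) (iteratedDeriv (k + 1) G z) z := by
  rw [iteratedDeriv_succ]
  apply DifferentiableAt.hasDerivAt
  rw [iteratedDeriv_eq_iterate]
  exact (hG.iterated_deriv k z hz).differentiableAt

lemma iter_leibniz (w : ℂ) (U : Set ℂ) (hU : IsOpen U) (G : ℂ → ℂ) (hG : AnalyticOnNhd ℂ G U)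
    (k : ℕ) : ∀ z ∈ U, iteratedDeriv (k + 1) (fun u => (1 - u * w) * G u) z =
      (1 - z * w) * iteratedDeriv (k + 1) G z - (k + 1) * w * iteratedDeriv k G z := by
  induction k with
  | zero =>
    intro z hz
    have h := (hasDerivAt_v w z).mul (iter_hasDeriv U G hG 0 z hz)
    simp only [iteratedDeriv_zero] at h
    rw [zero_add, iteratedDeriv_one]
    refine h.deriv.trans ?_
    simp only [iteratedDeriv_zero]
    push_cast
    ring
  | succ k ih =>
    intro z hz
    rw [iteratedDeriv_succ]
    have he : iteratedDeriv (k + 1) (fun u => (1 - u * w) * G u) =ᶠ[nhds z] fun z =>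
        (1 - z * w) * iteratedDeriv (k + 1) G z - (k + 1) * w * iteratedDeriv k G z := by
      filter_upwards [hU.mem_nhds hz] with u hu using ih u hu
    rw [he.deriv_eq]
    have h := ((hasDerivAt_v w z).mul (iter_hasDeriv U G hG (k + 1) z hz)).sub
      ((iter_hasDeriv U G hG k z hz).const_mul ((k + 1) * w))
    refine h.deriv.trans ?_
    push_cast
    ring

lemma rodrigues_aux (α β η : ℝ) (w : ℂ) (U : Set ℂ) (hU : IsOpen U)
    (hs0 : ∀ u ∈ U, u * w ∈ slitPlane) (hs1 : ∀ u ∈ U, 1 - u * w ∈ slitPlane)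
    (f : ℂ → ℂ) (hf : AnalyticOnNhd ℂ f U) (m : ℕ) : ∀ (γ : ℝ), ∀ z ∈ U,
    opAstarIter α β η w γ m f z
      = (-1 : ℂ) ^ m * hpow w (γ - α + m) (η - β) z *
          iteratedDeriv m (fun u => hpow w (α - γ) (β - η) u * f u) z := by
  have n0 : ∀ u ∈ U, u * w ≠ 0 := fun u hu => slitPlane_ne_zero (hs0 u hu)
  have n1 : ∀ u ∈ U, 1 - u * w ≠ 0 := fun u hu => slitPlane_ne_zero (hs1 u hu)
  induction m with
  | zero =>
    intro γ z hz
    have h := hpow_mul_hpow w (γ - α) (η - β) (α - γ) (β - η) z (n0 z hz) (n1 z hz)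
    have h2 : hpow w (γ - α + (α - γ)) (η - β + (β - η)) z = 1 := by
      rw [show γ - α + (α - γ) = 0 by ring, show η - β + (β - η) = 0 by ring]
      simp [hpow]
    simp only [opAstarIter, iteratedDeriv_zero, Nat.cast_zero, add_zero, pow_zero, one_mul]
    rw [← mul_assoc, h, h2, one_mul]
  | succ k ih =>
    intro γ z hz
    set G : ℂ → ℂ := fun u => hpow w (α - (γ + 1)) (β - η) u * f u with hGdef
    have hG : AnalyticOnNhd ℂ G U := fun u hu =>
      (hpow_analytic w _ _ u (hs0 u hu) (hs1 u hu)).mul (hf u hu)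
    have hF : (fun u => hpow w (α - γ) (β - η) u * f u) =ᶠ[nhds z]
        fun u => (1 - u * w) * G u := by
      filter_upwards [hU.mem_nhds hz] with u hu
      have h := hpow_mul_hpow w (1 : ℕ) 0 (α - (γ + 1)) (β - η) u (n0 u hu) (n1 u hu)
      rw [hpow_nat_zero, pow_one] at h
      rw [hGdef]
      simp only
      rw [← mul_assoc, h]
      congr 2 <;> push_cast <;> ring
    rw [hF.iteratedDeriv_eq, iter_leibniz w U hU G hG k z hz]
    simp only [opAstarIter, opAstarJ]
    have hd : (fun u' => hpow w (α - γ - (1 : ℕ) + 1) (β - η) u' *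
        opAstarIter α β η w (γ + 1) k f u') =ᶠ[nhds z]
        fun u => (-1 : ℂ) ^ k * ((1 - u * w) ^ (k + 1) * iteratedDeriv k G u) := by
      filter_upwards [hU.mem_nhds hz] with u hu
      rw [ih (γ + 1) u hu, ← hpow_nat_zero]
      have h := hpow_mul_hpow w (α - γ - (1 : ℕ) + 1) (β - η) (γ + 1 - α + k) (η - β) u
        (n0 u hu) (n1 u hu)
      rw [show α - γ - ((1 : ℕ) : ℝ) + 1 + (γ + 1 - α + k) = ((k + 1 : ℕ) : ℝ) by
        push_cast; ring, show β - η + (η - β) = 0 by ring] at h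
      rw [← h]
      ring
    rw [hd.deriv_eq]
    have hD := ((((hasDerivAt_v w z).pow (k + 1)).mul
      (iter_hasDeriv U G hG k z hz)).const_mul ((-1 : ℂ) ^ k)).deriv
    have h3 := hpow_mul_hpow w (γ + (1 : ℕ) - α) (η - β) (k : ℕ) 0 z (n0 z hz) (n1 z hz)
    rw [hpow_nat_zero, show γ + ((1 : ℕ) : ℝ) - α + (k : ℕ) = γ - α + ((k + 1 : ℕ) : ℝ) by
        push_cast; ring, add_zero] at h3
    rw [← h3]
    refine (congrArg _ hD).trans ?_
    simp only [Pi.pow_apply, Nat.add_sub_cancel]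
    push_cast
    ring

/-- Closed Rodrigues-type expression for the `m`-fold composition `A*_1 ∘ ⋯ ∘ A*_m`. -/
theorem opAstarIter_rodrigues (α β γ η : ℝ) (w : ℂ) (U : Set ℂ) (hU : IsOpen U)
    (hUsub : U ⊆ {u : ℂ | ¬((u * w).re ≤ 0 ∧ (u * w).im = 0) ∧
      ¬((1 - u * w).re ≤ 0 ∧ (1 - u * w).im = 0)})
    (f : ℂ → ℂ) (hf : AnalyticOnNhd ℂ f U) (m : ℕ) (hm : 0 < m) (z : ℂ) (hz : z ∈ U) :
    opAstarIter α β η w γ m f z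
      = (-1 : ℂ) ^ m * hpow w (γ - α + m) (η - β) z *
          iteratedDeriv m (fun u => hpow w (α - γ) (β - η) u * f u) z := by
  refine rodrigues_aux α β η w U hU (fun u hu => ?_) (fun u hu => ?_) f hf m γ z hz
  · have h := (hUsub hu).1
    rw [mem_slitPlane_iff]
    by_contra! hc
    exact h ⟨hc.1, hc.2⟩
  · have h := (hUsub hu).2
    rw [mem_slitPlane_iff]
    by_contra! hc
    exact h ⟨hc.1, hc.2⟩
end

section
/- Let κ > -1 and ρ > -1 be real and let m, n be nonnegative integers. For every w ∈ ℂ write F(u) := Z^{κ,ρ}_{m,n}(u,w). Then for every z ∈ ℂ with z ≠ 0, F satisfies the second-order differential equation z²(1-zw)·F''(z) + ((m+ρ-n+1) - (κ+m+ρ-n+2)·zw)·z·F'(z) + n(κ+m+ρ+1)·zw·F(z) = ρ(n-m)·F(z), where derivatives are complex derivatives in u with w held fixed. -/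
open Complex Finset

/-- coefficient of the `j`-th term -/
noncomputable def fzC (κ ρ : ℝ) (m n j : ℕ) : ℂ :=
  ((-1 : ℂ) ^ j * (Nat.factorial m : ℂ) * Complex.Gamma ((n : ℂ) + ρ + 1) *
        Complex.Gamma ((κ : ℂ) + m + 1) /
      ((Nat.factorial j : ℂ) * (Nat.factorial (m - j) : ℂ) *
        Complex.Gamma ((n : ℂ) + ρ - j + 1) * Complex.Gamma ((κ : ℂ) + j + 1)))

/-- the `j`-th monomial -/
noncomputable def fzT (m n : ℕ) (w : ℂ) (j : ℕ) (u : ℂ) : ℂ :=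
  (1 - u * w) ^ j * u ^ ((n : ℤ) - (j : ℤ)) * w ^ (m - j)

/-- its first derivative -/
noncomputable def fzT1 (m n : ℕ) (w : ℂ) (j : ℕ) (u : ℂ) : ℂ :=
  ((j : ℂ) * (1 - u * w) ^ (j - 1) * (-w) * u ^ ((n : ℤ) - (j : ℤ))
    + (1 - u * w) ^ j * ((((n : ℤ) - (j : ℤ) : ℤ) : ℂ) * u ^ ((n : ℤ) - (j : ℤ) - 1))) * w ^ (m - j)

/-- its second derivative -/
noncomputable def fzT2 (m n : ℕ) (w : ℂ) (j : ℕ) (u : ℂ) : ℂ :=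
  (((j : ℂ) * (((j - 1 : ℕ) : ℂ) * (1 - u * w) ^ (j - 1 - 1) * (-w)) * (-w)
      * u ^ ((n : ℤ) - (j : ℤ))
    + (j : ℂ) * (1 - u * w) ^ (j - 1) * (-w) *
      ((((n : ℤ) - (j : ℤ) : ℤ) : ℂ) * u ^ ((n : ℤ) - (j : ℤ) - 1)))
    + ((j : ℂ) * (1 - u * w) ^ (j - 1) * (-w) *
      ((((n : ℤ) - (j : ℤ) : ℤ) : ℂ) * u ^ ((n : ℤ) - (j : ℤ) - 1))
    + (1 - u * w) ^ j * ((((n : ℤ) - (j : ℤ) : ℤ) : ℂ) *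
      ((((n : ℤ) - (j : ℤ) - 1 : ℤ) : ℂ) * u ^ ((n : ℤ) - (j : ℤ) - 1 - 1))))) * w ^ (m - j)

lemma fz_hasDerivAt_pow (w u : ℂ) (j : ℕ) :
    HasDerivAt (fun u : ℂ => (1 - u * w) ^ j) ((j : ℂ) * (1 - u * w) ^ (j - 1) * (-w)) u := by
  have h : HasDerivAt (fun u : ℂ => 1 - u * w) (-w) u := by
    simpa using ((hasDerivAt_id u).mul_const w).const_sub 1
  exact h.fun_pow j

lemma fzT_hasDerivAt (m n : ℕ) (w : ℂ) (j : ℕ) (u : ℂ) (hu : u ≠ 0) :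
    HasDerivAt (fzT m n w j) (fzT1 m n w j u) u :=
  ((fz_hasDerivAt_pow w u j).mul (hasDerivAt_zpow _ u (Or.inl hu))).mul_const _

lemma fzT1_hasDerivAt (m n : ℕ) (w : ℂ) (j : ℕ) (u : ℂ) (hu : u ≠ 0) :
    HasDerivAt (fzT1 m n w j) (fzT2 m n w j u) u :=
  (((((fz_hasDerivAt_pow w u (j - 1)).const_mul (j : ℂ)).mul_const (-w)).mul
      (hasDerivAt_zpow _ u (Or.inl hu))).add
    ((fz_hasDerivAt_pow w u j).mul
      ((hasDerivAt_zpow _ u (Or.inl hu)).const_mul _))).mul_const _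

lemma fzC_succ (κ ρ : ℝ) (m n j : ℕ) (hj : j < m) :
    fzC κ ρ m n (j + 1) * ((j + 1 : ℂ) * (j + 1 + κ))
      = - (fzC κ ρ m n j * ((m - j : ℂ) * (n + ρ - j))) := by
  obtain ⟨k, rfl⟩ := Nat.exists_eq_add_of_lt hj
  have h1 := Complex.one_div_Gamma_eq_self_mul_one_div_Gamma_add_one ((n : ℂ) + ρ - j)
  have h2 := Complex.one_div_Gamma_eq_self_mul_one_div_Gamma_add_one ((κ : ℂ) + j + 1)
  unfold fzC
  have e1 : (n : ℂ) + ρ - ((j + 1 : ℕ) : ℂ) + 1 = n + ρ - j := by push_cast; ring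
  have e2 : (κ : ℂ) + ((j + 1 : ℕ) : ℂ) + 1 = κ + j + 1 + 1 := by push_cast; ring
  have e3 : j + k + 1 - (j + 1) = k := by omega
  have e4 : j + k + 1 - j = k + 1 := by omega
  rw [e1, e2, e3, e4, Nat.factorial_succ j, Nat.factorial_succ k]
  have f1 : (j.factorial : ℂ) ≠ 0 := by exact_mod_cast j.factorial_ne_zero
  have f2 : (k.factorial : ℂ) ≠ 0 := by exact_mod_cast k.factorial_ne_zero
  have f3 : (j : ℂ) + 1 ≠ 0 := by exact_mod_cast j.succ_ne_zero
  have f4 : (k : ℂ) + 1 ≠ 0 := by exact_mod_cast k.succ_ne_zero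
  simp only [div_eq_mul_inv, mul_inv]
  rw [h1, h2]
  push_cast
  generalize (Complex.Gamma ((n : ℂ) + ρ - j + 1))⁻¹ = A
  generalize (Complex.Gamma ((κ : ℂ) + j + 1 + 1))⁻¹ = B
  field_simp
  ring

lemma fzT_ode (κ ρ : ℝ) (m n j : ℕ) (hj : j ≤ m) (w z : ℂ) (hz : z ≠ 0) :
    z ^ 2 * (1 - z * w) * fzT2 m n w j z
      + (((m : ℂ) + ρ - n + 1) - ((κ : ℂ) + m + ρ - n + 2) * (z * w)) * z * fzT1 m n w j z
      + (n : ℂ) * ((κ : ℂ) + m + ρ + 1) * (z * w) * fzT m n w j z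
      - (ρ : ℂ) * ((n : ℂ) - m) * fzT m n w j z
    = (j : ℂ) * (j + κ) * fzT m n w (j - 1) z + (m - j : ℂ) * (n + ρ - j) * fzT m n w j z := by
  obtain ⟨k, rfl⟩ := Nat.exists_eq_add_of_le hj
  unfold fzT fzT1 fzT2
  rcases j with _ | _ | j
  · simp only [zpow_sub_one₀ hz]
    simp
    field_simp
    ring
  · have e1 : 0 + 1 + k - (0 + 1) = k := by omega
    have e2 : 0 + 1 + k - (0 + 1 - 1) = k + 1 := by omega
    rw [e1, e2]
    push_cast
    simp only [zpow_sub_one₀ hz, zero_add]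
    simp [zpow_sub_one₀ hz]
    field_simp
    ring
  · have e1 : j + 1 + 1 + k - (j + 1 + 1) = k := by omega
    have e2 : j + 1 + 1 + k - (j + 1 + 1 - 1) = k + 1 := by omega
    have e3 : (n : ℤ) - ((j + 1 + 1 - 1 : ℕ) : ℤ) = (n - j : ℤ) - 1 := by
      push_cast [Nat.add_sub_cancel]; ring
    have e4 : (n : ℤ) - ((j + 1 + 1 : ℕ) : ℤ) = (n - j : ℤ) - 1 - 1 := by
      push_cast; ring
    rw [e1, e2, e3, e4]
    simp only [zpow_sub_one₀ hz, Nat.add_sub_cancel]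
    push_cast
    generalize z ^ ((n : ℤ) - j) = Q
    field_simp
    ring

lemma fracZernike_eq (κ ρ : ℝ) (m n : ℕ) (u w : ℂ) :
    fracZernike κ ρ m n u w = ∑ j ∈ Finset.range (m + 1), fzC κ ρ m n j * fzT m n w j u := by
  unfold fracZernike fzC fzT
  refine Finset.sum_congr rfl fun j _ => ?_
  ring

lemma fz_sum (κ ρ : ℝ) (m n : ℕ) (w z : ℂ) (hz : z ≠ 0) (N : ℕ) (hN : N ≤ m) :
    ∑ j ∈ Finset.range (N + 1), fzC κ ρ m n j *
      ((j : ℂ) * (j + κ) * fzT m n w (j - 1) z + (m - j : ℂ) * (n + ρ - j) * fzT m n w j z)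
    = fzC κ ρ m n N * ((m - N : ℂ) * (n + ρ - N) * fzT m n w N z) := by
  induction N with
  | zero => simp
  | succ N ih =>
    rw [Finset.sum_range_succ, ih (by omega), Nat.add_sub_cancel]
    have h := fzC_succ κ ρ m n N (by omega)
    push_cast
    linear_combination fzT m n w N z * h

/-- The second order differential equation satisfied by the fractional Zernike function
`F(u) = Z^{κ,ρ}_{m,n}(u,w)` as a function of the first variable. -/
theorem fracZernike_ode (κ ρ : ℝ) (hκ : -1 < κ) (hρ : -1 < ρ) (m n : ℕ) (w z : ℂ)
    (hz : z ≠ 0) :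
    z ^ 2 * (1 - z * w) * deriv (deriv (fun u => fracZernike κ ρ m n u w)) z
      + (((m : ℂ) + ρ - n + 1) - ((κ : ℂ) + m + ρ - n + 2) * (z * w)) * z *
          deriv (fun u => fracZernike κ ρ m n u w) z
      + (n : ℂ) * ((κ : ℂ) + m + ρ + 1) * (z * w) * fracZernike κ ρ m n z w
    = (ρ : ℂ) * ((n : ℂ) - m) * fracZernike κ ρ m n z w := by
  have hF : (fun u => fracZernike κ ρ m n u w)
      = fun u => ∑ j ∈ Finset.range (m + 1), fzC κ ρ m n j * fzT m n w j u := by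
    funext u; exact fracZernike_eq κ ρ m n u w
  have hd : ∀ u : ℂ, u ≠ 0 → deriv (fun u => fracZernike κ ρ m n u w) u
      = ∑ j ∈ Finset.range (m + 1), fzC κ ρ m n j * fzT1 m n w j u := by
    intro u hu
    rw [hF]
    exact (HasDerivAt.fun_sum fun j _ => (fzT_hasDerivAt m n w j u hu).const_mul _).deriv
  have hd2 : deriv (deriv (fun u => fracZernike κ ρ m n u w)) z
      = ∑ j ∈ Finset.range (m + 1), fzC κ ρ m n j * fzT2 m n w j z := by
    have he : deriv (fun u => fracZernike κ ρ m n u w) =ᶠ[nhds z]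
        fun u => ∑ j ∈ Finset.range (m + 1), fzC κ ρ m n j * fzT1 m n w j u := by
      filter_upwards [isOpen_ne.mem_nhds hz] with u hu using hd u hu
    rw [he.deriv_eq]
    exact (HasDerivAt.fun_sum fun j _ => (fzT1_hasDerivAt m n w j z hz).const_mul _).deriv
  rw [hd2, hd z hz, fracZernike_eq]
  have hs := fz_sum κ ρ m n w z hz m le_rfl
  rw [sub_self, zero_mul, zero_mul, mul_zero] at hs
  rw [← sub_eq_zero, ← hs]
  simp only [Finset.mul_sum]
  rw [← Finset.sum_add_distrib, ← Finset.sum_add_distrib, ← Finset.sum_sub_distrib]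
  refine Finset.sum_congr rfl fun j hj => ?_
  rw [← fzT_ode κ ρ m n j (by simpa [Nat.lt_succ_iff] using hj) w z hz]
  ring
end

section
/- Let κ > -1 and ρ > -1 be real and let m ≥ 1 and n ≥ 1 be integers. Then for every z ∈ ℂ with z ≠ 0 and every w ∈ ℂ, the fractional Zernike functions satisfy the recurrence Z^{κ,ρ}_{m,n}(z,w) = (κ+m)·w·Z^{κ,ρ}_{m-1,n}(z,w) - (n+ρ)·(1-zw)·Z^{κ+1,ρ}_{m-1,n-1}(z,w). -/
open Complex Finset

/-- Recurrence formula for the fractional Zernike functions. -/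
theorem fracZernike_recurrence (κ ρ : ℝ) (hκ : -1 < κ) (hρ : -1 < ρ) (m n : ℕ)
    (hm : 1 ≤ m) (hn : 1 ≤ n) (z : ℂ) (hz : z ≠ 0) (w : ℂ) :
    fracZernike κ ρ m n z w
      = ((κ : ℂ) + m) * w * fracZernike κ ρ (m - 1) n z w
        - ((n : ℂ) + ρ) * (1 - z * w) * fracZernike (κ + 1) ρ (m - 1) (n - 1) z w := by
  obtain ⟨M, rfl⟩ : ∃ M, m = M + 1 := ⟨m - 1, by omega⟩
  obtain ⟨N, rfl⟩ : ∃ N, n = N + 1 := ⟨n - 1, by omega⟩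
  simp only [Nat.add_sub_cancel]
  have hk : (κ : ℂ) + ((M + 1 : ℕ) : ℂ) ≠ 0 := by
    have h : κ + ((M + 1 : ℕ) : ℝ) ≠ 0 := by
      have : (0 : ℝ) ≤ M := Nat.cast_nonneg M
      push_cast
      linarith
    exact_mod_cast h
  have hr : ((N + 1 : ℕ) : ℂ) + (ρ : ℂ) ≠ 0 := by
    have h : ((N + 1 : ℕ) : ℝ) + ρ ≠ 0 := by
      have : (0 : ℝ) ≤ N := Nat.cast_nonneg N
      push_cast
      linarith
    exact_mod_cast h
  have hM : (M : ℂ) + 1 ≠ 0 := by exact_mod_cast Nat.succ_ne_zero M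
  have hGk := Complex.Gamma_add_one _ hk
  have hGr := Complex.Gamma_add_one _ hr
  unfold fracZernike
  set T : ℕ → ℂ := fun j => ((-1 : ℂ) ^ j * (Nat.factorial (M + 1) : ℂ) *
        Complex.Gamma (((N + 1 : ℕ) : ℂ) + ρ + 1) *
        Complex.Gamma ((κ : ℂ) + ((M + 1 : ℕ) : ℂ) + 1) /
      ((Nat.factorial j : ℂ) * (Nat.factorial (M + 1 - j) : ℂ) *
        Complex.Gamma (((N + 1 : ℕ) : ℂ) + ρ - j + 1) * Complex.Gamma ((κ : ℂ) + j + 1))) *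
    (1 - z * w) ^ j * z ^ (((N + 1 : ℕ) : ℤ) - (j : ℤ)) * w ^ (M + 1 - j) with hT
  have split : ∑ j ∈ Finset.range (M + 1 + 1), T j
      = ∑ j ∈ Finset.range (M + 1), T j * ((M + 1 - j) / (M + 1))
        + ∑ j ∈ Finset.range (M + 1), T (j + 1) * ((j + 1) / (M + 1)) := by
    have e1 : ∑ j ∈ Finset.range (M + 1 + 1), T j * (((M : ℂ) + 1 - j) / (M + 1))
        = ∑ j ∈ Finset.range (M + 1), T j * ((M + 1 - j) / (M + 1)) := by
      rw [Finset.sum_range_succ]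
      simp
    have e2 : ∑ j ∈ Finset.range (M + 1 + 1), T j * ((j : ℂ) / (M + 1))
        = ∑ j ∈ Finset.range (M + 1), T (j + 1) * ((j + 1) / (M + 1)) := by
      rw [Finset.sum_range_succ']
      simp
    rw [← e1, ← e2, ← Finset.sum_add_distrib]
    refine Finset.sum_congr rfl fun j _ => ?_
    field_simp
    ring
  rw [split, sub_eq_add_neg, Finset.mul_sum, Finset.mul_sum, ← Finset.sum_neg_distrib]
  congr 1
  · refine Finset.sum_congr rfl fun j hj => ?_
    obtain ⟨k, rfl⟩ : ∃ k, M = j + k := ⟨M - j, by have := Finset.mem_range.mp hj; omega⟩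
    have a1 : j + k + 1 - j = k + 1 := by omega
    have a2 : j + k - j = k := by omega
    have a3 : (κ : ℂ) + ((j + k : ℕ) : ℂ) + 1 = κ + ((j + k + 1 : ℕ) : ℂ) := by
      push_cast; ring
    have hk1 : (k : ℂ) + 1 ≠ 0 := by exact_mod_cast Nat.succ_ne_zero k
    have hkf : (Nat.factorial k : ℂ) ≠ 0 := by exact_mod_cast Nat.factorial_ne_zero k
    simp only [hT, a1, a2, a3, hGk, Nat.factorial_succ, div_eq_mul_inv, mul_inv, pow_succ]
    generalize (Complex.Gamma (((N + 1 : ℕ) : ℂ) + ρ - j + 1))⁻¹ = A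
    generalize (Complex.Gamma ((κ : ℂ) + j + 1))⁻¹ = B
    generalize Complex.Gamma (((N + 1 : ℕ) : ℂ) + ρ + 1) = C
    generalize Complex.Gamma ((κ : ℂ) + ((j + k + 1 : ℕ) : ℂ)) = D
    generalize z ^ (((N + 1 : ℕ) : ℤ) - (j : ℤ)) = E
    generalize ((Nat.factorial j : ℂ))⁻¹ = F
    clear hT split hGk hGr hk hr
    clear T
    generalize (-1 : ℂ) ^ j = P
    generalize (1 - z * w) ^ j = Q
    generalize w ^ k = W
    push_cast at hM ⊢
    generalize (Nat.factorial (j + k) : ℂ) = H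
    have e : ((j : ℂ) + k + 1 - j) = k + 1 := by ring
    rw [e]
    generalize (Nat.factorial k : ℂ) = K at *
    generalize (k : ℂ) = k' at *
    generalize (j : ℂ) = j' at *
    simp only [mul_inv]
    have c1 := mul_inv_cancel₀ hk1
    have c2 := mul_inv_cancel₀ hM
    generalize (k' + 1 : ℂ)⁻¹ = I at c1 ⊢
    generalize (j' + k' + 1 : ℂ)⁻¹ = J at c2 ⊢
    have key : ∀ X Y : ℂ, X = (k' + 1) * I * ((j' + k' + 1) * J) * Y → X = Y := by
      intro X Y h
      rw [h, c1, c2, one_mul, one_mul]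
    apply key
    ring
  · refine Finset.sum_congr rfl fun j hj => ?_
    have a1 : M + 1 - (j + 1) = M - j := by omega
    have a2 : ((N + 1 : ℕ) : ℂ) + ρ - ((j + 1 : ℕ) : ℂ) + 1 = (N : ℂ) + ρ - j + 1 := by
      push_cast; ring
    have a3 : ((κ + 1 : ℝ) : ℂ) + M + 1 = κ + ((M + 1 : ℕ) : ℂ) + 1 := by
      push_cast; ring
    have a4 : ((κ + 1 : ℝ) : ℂ) + j + 1 = κ + ((j + 1 : ℕ) : ℂ) + 1 := by
      push_cast; ring
    have a5 : (N : ℂ) + ρ + 1 = ((N + 1 : ℕ) : ℂ) + ρ := by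
      push_cast; ring
    have a6 : ((N + 1 : ℕ) : ℤ) - ((j + 1 : ℕ) : ℤ) = (N : ℤ) - j := by
      push_cast; ring
    have hj1 : (j : ℂ) + 1 ≠ 0 := by exact_mod_cast Nat.succ_ne_zero j
    have hjf : (Nat.factorial j : ℂ) ≠ 0 := by exact_mod_cast Nat.factorial_ne_zero j
    simp only [hT, a1, a2, a3, a4, a5, a6, hGr, Nat.factorial_succ, div_eq_mul_inv, mul_inv,
      pow_succ]
    generalize (Complex.Gamma ((N : ℂ) + ρ - j + 1))⁻¹ = A
    generalize (Complex.Gamma ((κ : ℂ) + ((j + 1 : ℕ) : ℂ) + 1))⁻¹ = B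
    generalize Complex.Gamma (((N + 1 : ℕ) : ℂ) + ρ) = C
    generalize Complex.Gamma ((κ : ℂ) + ((M + 1 : ℕ) : ℂ) + 1) = D
    generalize z ^ ((N : ℤ) - (j : ℤ)) = E
    generalize ((Nat.factorial (M - j) : ℂ))⁻¹ = F
    clear hT split hGk hGr hk hr
    clear T
    generalize (-1 : ℂ) ^ j = P
    generalize (1 - z * w) ^ j = Q
    generalize 1 - z * w = U
    generalize w ^ (M - j) = W
    push_cast at hM ⊢
    generalize (Nat.factorial M : ℂ) = H
    generalize (Nat.factorial j : ℂ) = K at *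
    generalize (M : ℂ) = M' at *
    generalize (j : ℂ) = j' at *
    simp only [mul_inv]
    have c1 := mul_inv_cancel₀ hj1
    have c2 := mul_inv_cancel₀ hM
    generalize (j' + 1 : ℂ)⁻¹ = I at c1 ⊢
    generalize (M' + 1 : ℂ)⁻¹ = J at c2 ⊢
    have key : ∀ X Y : ℂ, X = (j' + 1) * I * ((M' + 1) * J) * Y → X = Y := by
      intro X Y h
      rw [h, c1, c2, one_mul, one_mul]
    apply key
    ring
end

section
/- Let κ > -1 and ρ > -1 be real and let m, n be nonnegative integers. Then for every z ∈ ℂ with z ≠ 0 and every w ∈ ℂ, the creation operator ∇^{κ,ρ} raises the first index of the fractional Zernike functions: -[(1-zw) · D[u ↦ Z^{κ+1,ρ}_{m,n}(u,w)](z) - ((κ+ρ+1)·w - ρ/z) · Z^{κ+1,ρ}_{m,n}(z,w)] = Z^{κ,ρ}_{m+1,n}(z,w), where D denotes the complex derivative in u with w held fixed. -/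
open Complex Finset

/-- The coefficient of the fractional Zernike function. -/
noncomputable def zcoef (κ ρ : ℝ) (m n j : ℕ) : ℂ :=
  ((-1 : ℂ) ^ j * (Nat.factorial m : ℂ) * Complex.Gamma ((n : ℂ) + ρ + 1) *
        Complex.Gamma ((κ : ℂ) + m + 1) /
      ((Nat.factorial j : ℂ) * (Nat.factorial (m - j) : ℂ) *
        Complex.Gamma ((n : ℂ) + ρ - j + 1) * Complex.Gamma ((κ : ℂ) + j + 1)))

lemma gamma_shift (κ : ℝ) (hκ : -1 < κ) (j : ℕ) :
    Complex.Gamma ((κ : ℂ) + j + 1) ≠ 0 ∧ (κ : ℂ) + j + 1 ≠ 0 := by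
  have hj : (0 : ℝ) ≤ j := Nat.cast_nonneg j
  have hre : 0 < ((κ : ℂ) + j + 1).re := by
    simp
    linarith
  refine ⟨Complex.Gamma_ne_zero_of_re_pos hre, ?_⟩
  intro h
  rw [h] at hre
  simp at hre

lemma zcoef_first (κ ρ : ℝ) (hκ : -1 < κ) (m n j : ℕ) (hj : j ≤ m) :
    ((κ : ℂ) + j + 1) * zcoef (κ + 1) ρ m n j
      = zcoef κ ρ (m + 1) n j * (((m : ℂ) + 1 - j) / (m + 1)) := by
  obtain ⟨h1, h2⟩ := gamma_shift κ hκ j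
  obtain ⟨d, rfl⟩ := Nat.exists_eq_add_of_le hj
  have e1 : j + d + 1 - j = d + 1 := by omega
  have e2 : j + d - j = d := by omega
  unfold zcoef
  rw [e1, e2]
  have e3 : ((κ + 1 : ℝ) : ℂ) + j + 1 = ((κ : ℂ) + j + 1) + 1 := by push_cast; ring
  have e4 : ((κ + 1 : ℝ) : ℂ) + (j + d : ℕ) + 1 = (κ : ℂ) + (j + d + 1 : ℕ) + 1 := by
    push_cast; ring
  rw [e3, e4, Complex.Gamma_add_one _ h2, Nat.factorial_succ, Nat.factorial_succ]
  have h3 : ((d : ℂ) + 1) ≠ 0 := by exact_mod_cast Nat.succ_ne_zero d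
  have h4 : ((j : ℂ) + d + 1) ≠ 0 := by exact_mod_cast Nat.succ_ne_zero (j + d)
  have h5 : (d.factorial : ℂ) ≠ 0 := by exact_mod_cast Nat.factorial_ne_zero d
  have h6 : (j.factorial : ℂ) ≠ 0 := by exact_mod_cast Nat.factorial_ne_zero j
  generalize Complex.Gamma ((κ : ℂ) + (j + d + 1 : ℕ) + 1) = A
  push_cast
  have e5 : (j : ℂ) + d + 1 - j = d + 1 := by ring
  rw [e5]
  simp only [div_eq_mul_inv, mul_inv]
  generalize (Complex.Gamma ((n : ℂ) + ρ - j + 1))⁻¹ = B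
  field_simp

lemma zcoef_second (κ ρ : ℝ) (m n j : ℕ) :
    -((n : ℂ) + ρ - j) * zcoef (κ + 1) ρ m n j
      = zcoef κ ρ (m + 1) n (j + 1) * (((j + 1 : ℕ) : ℂ) / (m + 1)) := by
  unfold zcoef
  have e1 : m + 1 - (j + 1) = m - j := by omega
  have e3 : ((κ + 1 : ℝ) : ℂ) + j + 1 = (κ : ℂ) + (j + 1 : ℕ) + 1 := by push_cast; ring
  have e4 : ((κ + 1 : ℝ) : ℂ) + m + 1 = (κ : ℂ) + (m + 1 : ℕ) + 1 := by push_cast; ring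
  have e5 : (n : ℂ) + ρ - (j + 1 : ℕ) + 1 = (n : ℂ) + ρ - j := by push_cast; ring
  rw [e1, e3, e4, e5, Nat.factorial_succ, Nat.factorial_succ]
  have hG := Complex.one_div_Gamma_eq_self_mul_one_div_Gamma_add_one ((n : ℂ) + ρ - j)
  have h3 : ((j : ℂ) + 1) ≠ 0 := by exact_mod_cast Nat.succ_ne_zero j
  have h4 : ((m : ℂ) + 1) ≠ 0 := by exact_mod_cast Nat.succ_ne_zero m
  simp only [div_eq_mul_inv, mul_inv]
  rw [hG]
  generalize Complex.Gamma ((κ : ℂ) + (m + 1 : ℕ) + 1) = A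
  generalize (Complex.Gamma ((κ : ℂ) + (j + 1 : ℕ) + 1))⁻¹ = C
  generalize (Complex.Gamma ((n : ℂ) + ρ - j + 1))⁻¹ = B
  generalize ((m - j).factorial : ℂ)⁻¹ = E
  generalize (n : ℂ) + ρ - j = F
  push_cast
  rw [mul_inv, pow_succ]
  field_simp

lemma hasDeriv_term (c : ℂ) (n j k : ℕ) (z : ℂ) (hz : z ≠ 0) (w : ℂ) :
    HasDerivAt (fun u : ℂ => c * (1 - u * w) ^ j * u ^ ((n : ℤ) - (j : ℤ)) * w ^ k)
      (c * ((j : ℂ) * (1 - z * w) ^ (j - 1) * (-w)) * z ^ ((n : ℤ) - (j : ℤ)) * w ^ k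
        + c * (1 - z * w) ^ j * (((n : ℂ) - j) * z ^ ((n : ℤ) - (j : ℤ) - 1)) * w ^ k) z := by
  have h0 : HasDerivAt (fun u : ℂ => 1 - u * w) (-w) z := by
    simpa using ((hasDerivAt_id z).mul_const w).const_sub 1
  have h1 := (h0.pow j).const_mul c
  have h2 := hasDerivAt_zpow ((n : ℤ) - (j : ℤ)) z (Or.inl hz)
  have h3 := (h1.mul h2).mul_const (w ^ k)
  refine h3.congr_deriv ?_
  push_cast
  simp only [Pi.pow_apply]
  ring

theorem fracZernike_creation (κ ρ : ℝ) (hκ : -1 < κ) (hρ : -1 < ρ) (m n : ℕ)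
    (z : ℂ) (hz : z ≠ 0) (w : ℂ) :
    -((1 - z * w) * deriv (fun u => fracZernike (κ + 1) ρ m n u w) z
        - (((κ : ℂ) + ρ + 1) * w - (ρ : ℂ) / z) * fracZernike (κ + 1) ρ m n z w)
      = fracZernike κ ρ (m + 1) n z w := by
  have hZ : ∀ (κ : ℝ) (m : ℕ) (u : ℂ), fracZernike κ ρ m n u w
      = ∑ j ∈ Finset.range (m + 1), zcoef κ ρ m n j * (1 - u * w) ^ j
          * u ^ ((n : ℤ) - (j : ℤ)) * w ^ (m - j) := fun _ _ _ => rfl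
  have hD := (HasDerivAt.fun_sum (u := Finset.range (m + 1)) (fun j _ =>
    hasDeriv_term (zcoef (κ + 1) ρ m n j) n j (m - j) z hz w)).deriv
  simp only [hZ]
  rw [hD]
  have hm : ((m : ℂ) + 1) ≠ 0 := by exact_mod_cast Nat.succ_ne_zero m
  -- split the right-hand side
  have hR : ∑ j ∈ Finset.range (m + 1 + 1), zcoef κ ρ (m + 1) n j * (1 - z * w) ^ j
          * z ^ ((n : ℤ) - (j : ℤ)) * w ^ (m + 1 - j)
      = ∑ j ∈ Finset.range (m + 1 + 1), zcoef κ ρ (m + 1) n j * (((m : ℂ) + 1 - j) / (m + 1))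
          * ((1 - z * w) ^ j * z ^ ((n : ℤ) - (j : ℤ)) * w ^ (m + 1 - j))
        + ∑ j ∈ Finset.range (m + 1 + 1), zcoef κ ρ (m + 1) n j * ((j : ℂ) / (m + 1))
          * ((1 - z * w) ^ j * z ^ ((n : ℤ) - (j : ℤ)) * w ^ (m + 1 - j)) := by
    rw [← Finset.sum_add_distrib]
    refine Finset.sum_congr rfl fun j _ => ?_
    generalize z ^ ((n : ℤ) - (j : ℤ)) = A
    field_simp
    ring
  rw [hR, Finset.sum_range_succ (n := m + 1), Finset.sum_range_succ' (n := m + 1)]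
  have z1 : ((m : ℂ) + 1 - ((m + 1 : ℕ) : ℂ)) / (m + 1) = 0 := by push_cast; simp
  rw [z1]
  simp only [Nat.cast_zero, zero_div, mul_zero, zero_mul, add_zero]
  rw [← Finset.sum_add_distrib, Finset.mul_sum, Finset.mul_sum, ← Finset.sum_sub_distrib,
    ← Finset.sum_neg_distrib]
  refine Finset.sum_congr rfl fun j hj => ?_
  have hjm : j ≤ m := by simpa [Nat.lt_succ_iff] using hj
  rw [← zcoef_first κ ρ hκ m n j hjm, ← zcoef_second κ ρ m n j]
  have e1 : m + 1 - j = (m - j) + 1 := by omega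
  have e2 : m + 1 - (j + 1) = m - j := by omega
  have e3 : (n : ℤ) - ((j + 1 : ℕ) : ℤ) = (n : ℤ) - j - 1 := by push_cast; ring
  have e4 : z ^ ((n : ℤ) - (j : ℤ)) = z ^ ((n : ℤ) - (j : ℤ) - 1) * z := by
    rw [← zpow_add_one₀ hz]; congr 1; ring
  have e5 : (j : ℂ) * (1 - z * w) ^ j = (j : ℂ) * (1 - z * w) ^ (j - 1) * (1 - z * w) := by
    rcases j with _ | j
    · simp
    · simp [pow_succ]; ring
  rw [e1, e2, e3, e4]
  generalize z ^ ((n : ℤ) - (j : ℤ) - 1) = X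
  generalize zcoef (κ + 1) ρ m n j = c
  generalize (1 - z * w) ^ (j - 1) = Q at *
  rw [pow_succ, pow_succ]
  generalize (1 - z * w) ^ j = P at *
  generalize w ^ (m - j) = W
  have e6 : (ρ : ℂ) / z * z = ρ := by field_simp
  linear_combination (-c * X * z * w * W) * e5 - c * P * X * W * e6
end

section
/- Let κ > -1 and ρ > -1 be real, m, n nonnegative integers, and w ∈ ℂ. Let z ∈ ℂ with z ∉ (-∞,0] and 1-zw ∉ (-∞,0], and let f be analytic on an open neighborhood of z contained in {u : u ∉ (-∞,0], 1-uw ∉ (-∞,0]}. Then the following Burchnall-type operational formula holds: D^m[u ↦ u^n · u^ρ · (1-uw)^{κ+m} · f(u)](z) = (-1)^m · m! · z^ρ · (1-zw)^κ · Σ_{j=0}^{m} [(-1)^j (1-zw)^j / (j! (m-j)!)] · Z^{κ+j,ρ}_{m-j,n}(z,w) · f^{(j)}(z), where D^m is the m-th complex derivative in u with w held fixed and f^{(j)} is the j-th derivative of f. -/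
open Complex Finset

/-- Falling factorial. -/
noncomputable def ffall (a : ℂ) (i : ℕ) : ℂ := ∏ k ∈ Finset.range i, (a - k)

lemma iteratedDeriv_lin_cpow (c d b : ℂ) (i : ℕ) : ∀ z : ℂ, c + d * z ∈ Complex.slitPlane →
    iteratedDeriv i (fun u : ℂ => (c + d * u) ^ b) z
      = ffall b i * d ^ i * (c + d * z) ^ (b - i) := by
  induction i with
  | zero => intro z hz; simp [ffall]
  | succ i ih =>
    intro z hz
    rw [iteratedDeriv_succ]
    have hev : iteratedDeriv i (fun u : ℂ => (c + d * u) ^ b) =ᶠ[nhds z]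
        fun u => ffall b i * d ^ i * (c + d * u) ^ (b - i) := by
      have hc : ContinuousAt (fun u : ℂ => c + d * u) z := by fun_prop
      filter_upwards [hc.preimage_mem_nhds (Complex.isOpen_slitPlane.mem_nhds hz)] with u hu
      exact ih u hu
    rw [hev.deriv_eq]
    have hl : HasDerivAt (fun u : ℂ => c + d * u) d z := by
      simpa using ((hasDerivAt_id z).const_mul d).const_add c
    have := ((hl.cpow_const (c := b - i) hz).const_mul (ffall b i * d ^ i)).deriv
    rw [this, ffall, ffall, Finset.prod_range_succ]
    rw [show b - ((i + 1 : ℕ) : ℂ) = b - i - 1 by push_cast; ring]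
    ring

lemma contDiffAt_lin_cpow (c d b z : ℂ) (N : WithTop ℕ∞) (hz : c + d * z ∈ Complex.slitPlane) :
    ContDiffAt ℂ N (fun u : ℂ => (c + d * u) ^ b) z := by
  have : AnalyticAt ℂ (fun u : ℂ => (c + d * u) ^ b) z :=
    AnalyticAt.cpow (by fun_prop) analyticAt_const hz
  exact this.contDiffAt

lemma ffall_gamma (a : ℝ) (ha : -1 < a) (i : ℕ) :
    Complex.Gamma ((a : ℂ) + 1) / Complex.Gamma ((a : ℂ) - i + 1) = ffall a i := by
  have h0 : Complex.Gamma ((a : ℂ) + 1) ≠ 0 := by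
    apply Complex.Gamma_ne_zero_of_re_pos
    simp; linarith
  induction i with
  | zero => simp [ffall, h0]
  | succ i ih =>
    rw [ffall, Finset.prod_range_succ, ← ffall, ← ih]
    rw [show (a : ℂ) - ((i + 1 : ℕ) : ℂ) + 1 = a - i by push_cast; ring]
    by_cases hai : (a : ℂ) - i = 0
    · simp [hai, Complex.Gamma_zero]
    · rw [Complex.Gamma_add_one _ hai]
      field_simp

/-- Burchnall-type operational formula for the fractional Zernike functions. -/
theorem fracZernike_burchnall (κ ρ : ℝ) (hκ : -1 < κ) (hρ : -1 < ρ) (m n : ℕ) (w : ℂ)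
    (z : ℂ) (hz : ¬(z.re ≤ 0 ∧ z.im = 0)) (h1 : ¬((1 - z * w).re ≤ 0 ∧ (1 - z * w).im = 0))
    (U : Set ℂ) (hU : IsOpen U) (hzU : z ∈ U)
    (hUsub : U ⊆ {u : ℂ | ¬(u.re ≤ 0 ∧ u.im = 0) ∧ ¬((1 - u * w).re ≤ 0 ∧ (1 - u * w).im = 0)})
    (f : ℂ → ℂ) (hf : AnalyticOnNhd ℂ f U) :
    iteratedDeriv m (fun u : ℂ => u ^ n * u ^ (ρ : ℂ) * (1 - u * w) ^ ((κ : ℂ) + m) * f u) z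
      = (-1 : ℂ) ^ m * (Nat.factorial m : ℂ) * z ^ (ρ : ℂ) * (1 - z * w) ^ (κ : ℂ) *
          ∑ j ∈ Finset.range (m + 1),
            (-1 : ℂ) ^ j * (1 - z * w) ^ j /
                ((Nat.factorial j : ℂ) * (Nat.factorial (m - j) : ℂ)) *
              fracZernike (κ + j) ρ (m - j) n z w * iteratedDeriv j f z := by
  have hz' : z ∈ Complex.slitPlane := by
    rw [Complex.mem_slitPlane_iff]
    by_contra h; push Not at h; exact hz h
  have h1' : 1 - z * w ∈ Complex.slitPlane := by
    rw [Complex.mem_slitPlane_iff]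
    by_contra h; push Not at h; exact h1 h
  have hz0 : z ≠ 0 := Complex.slitPlane_ne_zero hz'
  have h10 : 1 - z * w ≠ 0 := Complex.slitPlane_ne_zero h1'
  have e1 : ∀ u : ℂ, 1 + (-w) * u = 1 - u * w := fun u => by ring
  have hL : (0 : ℂ) + 1 * z ∈ Complex.slitPlane := by simpa using hz'
  have hR : (1 : ℂ) + (-w) * z ∈ Complex.slitPlane := by rw [e1]; exact h1'
  have hev : (fun u : ℂ => u ^ n * u ^ (ρ : ℂ) * (1 - u * w) ^ ((κ : ℂ) + m) * f u) =ᶠ[nhds z]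
      (fun u : ℂ => f u * ((0 + 1 * u) ^ ((n : ℂ) + ρ) * (1 + (-w) * u) ^ ((κ : ℂ) + m))) := by
    filter_upwards [isOpen_ne.mem_nhds hz0] with u hu
    rw [e1, zero_add, one_mul, Complex.cpow_add _ _ hu, Complex.cpow_natCast]
    ring
  rw [hev.iteratedDeriv_eq]
  have hA := contDiffAt_lin_cpow 0 1 ((n : ℂ) + ρ) z
  have hB := contDiffAt_lin_cpow 1 (-w) ((κ : ℂ) + m) z
  rw [iteratedDeriv_fun_mul (hf z hzU).contDiffAt ((hA _ hL).mul (hB _ hR)), Finset.mul_sum]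
  apply Finset.sum_congr rfl
  intro j hj
  have hjm : j ≤ m := by simpa [Nat.lt_succ_iff] using hj
  rw [iteratedDeriv_fun_mul (hA _ hL) (hB _ hR), fracZernike, Finset.mul_sum, Finset.mul_sum,
    Finset.sum_mul, Finset.mul_sum]
  apply Finset.sum_congr rfl
  intro i hi
  obtain ⟨p, rfl⟩ := Nat.exists_eq_add_of_le hjm
  have hip : i ≤ p := by
    have := Finset.mem_range.1 hi
    omega
  obtain ⟨q, rfl⟩ := Nat.exists_eq_add_of_le hip
  rw [iteratedDeriv_lin_cpow _ _ _ _ _ hL, iteratedDeriv_lin_cpow _ _ _ _ _ hR]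
  have s1 : j + (i + q) - j = i + q := by omega
  have s2 : i + q - i = q := by omega
  rw [s1, s2, e1, zero_add, one_mul, one_pow, mul_one]
  have g1 := ffall_gamma (n + ρ) (by have : (0 : ℝ) ≤ n := n.cast_nonneg
                                     linarith) i
  have g2 := ffall_gamma (κ + (j + (i + q) : ℕ)) (by
    have : (0 : ℝ) ≤ (j + (i + q) : ℕ) := Nat.cast_nonneg _
    linarith) q
  have c1 : ((j + (i + q)).choose j : ℂ) = (Nat.factorial (j + (i + q)) : ℂ) /
      ((Nat.factorial j : ℂ) * (Nat.factorial (i + q) : ℂ)) := by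
    rw [Nat.cast_choose ℂ (by omega), s1]
  have c2 : ((i + q).choose i : ℂ) = (Nat.factorial (i + q) : ℂ) /
      ((Nat.factorial i : ℂ) * (Nat.factorial q : ℂ)) := by
    rw [Nat.cast_choose ℂ (by omega), s2]
  have p1 : z ^ ((n : ℂ) + ρ - i) = z ^ (ρ : ℂ) * z ^ ((n : ℤ) - (i : ℤ)) := by
    rw [← Complex.cpow_intCast, ← Complex.cpow_add _ _ hz0]
    congr 1; push_cast; ring
  have p2 : (1 - z * w) ^ ((κ : ℂ) + (j + (i + q) : ℕ) - q)
      = (1 - z * w) ^ (κ : ℂ) * (1 - z * w) ^ j * (1 - z * w) ^ i := by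
    rw [← Complex.cpow_natCast, ← Complex.cpow_natCast, ← Complex.cpow_add _ _ h10,
      ← Complex.cpow_add _ _ h10]
    congr 1; push_cast; ring
  have sg : (-1 : ℂ) ^ (j + (i + q)) * (-1) ^ j * (-1) ^ i = (-1) ^ q := by
    rw [pow_add, pow_add]
    have hj2 : ((-1 : ℂ) ^ j) * (-1) ^ j = 1 := by rw [← mul_pow]; simp
    have hi2 : ((-1 : ℂ) ^ i) * (-1) ^ i = 1 := by rw [← mul_pow]; simp
    linear_combination ((-1 : ℂ) ^ i * (-1) ^ i * (-1) ^ q) * hj2 + (-1 : ℂ) ^ q * hi2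
  rw [p1, p2, c1, c2, neg_pow w, ← sg]
  push_cast at g1 g2 ⊢
  rw [← g1, ← g2]
  rw [show (κ : ℂ) + (j + (i + q)) - q + 1 = κ + j + i + 1 by ring,
    show (κ : ℂ) + (j + (i + q)) + 1 = κ + j + (i + q) + 1 by ring]
  simp only [div_eq_mul_inv, mul_inv]
  ring
end
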